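/- arXiv:2512.20850 — 8 statements merged into one kernel-verified Lean document; each statement's English description precedes it below -/
import Mathlib

section
/- Every weakly chained diagonally dominant real M×M matrix is nonsingular. -/
open Finset

/-- Edge relation of the directed graph of a matrix: an edge from `i` to `j` (with `i ≠ j`)
whenever `A i j ≠ 0`. -/
def Matrix.GraphEdge {M : ℕ} (A : Matrix (Fin M) (Fin M) ℝ) (i j : Fin M) : Prop :=
  i ≠ j ∧ A i j ≠ 0

/-- Row `i` of `A` is strictly diagonally dominant: `|a_{ii}| > ∑_{j ≠ i} |a_{ij}|`. -/
def Matrix.SDDRow {M : ℕ} (A : Matrix (Fin M) (Fin M) ℝ) (i : Fin M) : Prop :=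
  ∑ j ∈ Finset.univ.erase i, |A i j| < |A i i|

/-- `A` is weakly diagonally dominant: `|a_{ii}| ≥ ∑_{j ≠ i} |a_{ij}|` for every row `i`. -/
def Matrix.WDD {M : ℕ} (A : Matrix (Fin M) (Fin M) ℝ) : Prop :=
  ∀ i, ∑ j ∈ Finset.univ.erase i, |A i j| ≤ |A i i|

/-- `A` is weakly chained diagonally dominant: it is weakly diagonally dominant and from
every row there is a (possibly empty) directed path in the graph of `A` to a strictly
diagonally dominant row. -/
def Matrix.WCDD {M : ℕ} (A : Matrix (Fin M) (Fin M) ℝ) : Prop :=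
  A.WDD ∧ ∀ i, ∃ j, Relation.ReflTransGen A.GraphEdge i j ∧ A.SDDRow j

/-!
An entry of maximal norm in a kernel vector forces, at a weakly dominant row, equality throughout
the triangle inequality for that row, so the maximum is also attained at every neighbour in the
graph of the matrix. It is therefore carried along a path to a strictly dominant row, where equality
is possible only if the maximum is zero.
-/

section Kernel

variable {R n : Type*} [NonUnitalNormedRing R] [NormMulClass R] [Fintype n] [DecidableEq n]
  {A : Matrix n n R} {v : n → R} {i j : n}

lemma norm_diag_mul_norm_le_of_mulVec_apply_eq_zero (hAv : A.mulVec v i = 0) :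
    ‖A i i‖ * ‖v i‖ ≤ ∑ k ∈ univ.erase i, ‖A i k‖ * ‖v k‖ := by
  have hrow : A i i * v i + ∑ k ∈ univ.erase i, A i k * v k = 0 :=
    (add_sum_erase univ (fun k ↦ A i k * v k) (mem_univ i)).trans hAv
  calc
    ‖A i i‖ * ‖v i‖ = ‖∑ k ∈ univ.erase i, A i k * v k‖ := by
      rw [← norm_mul, eq_neg_of_add_eq_zero_left hrow, norm_neg]
    _ ≤ ∑ k ∈ univ.erase i, ‖A i k * v k‖ := norm_sum_le _ _
    _ = ∑ k ∈ univ.erase i, ‖A i k‖ * ‖v k‖ := by simp only [norm_mul]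

lemma apply_eq_zero_of_sum_row_lt_diag (hAv : A.mulVec v i = 0) (hmax : ∀ k, ‖v k‖ ≤ ‖v i‖)
    (hstrict : ∑ k ∈ univ.erase i, ‖A i k‖ < ‖A i i‖) : v i = 0 := by
  by_contra hvi
  refine lt_irrefl (‖A i i‖ * ‖v i‖) ?_
  calc
    ‖A i i‖ * ‖v i‖ ≤ ∑ k ∈ univ.erase i, ‖A i k‖ * ‖v k‖ :=
      norm_diag_mul_norm_le_of_mulVec_apply_eq_zero hAv
    _ ≤ ∑ k ∈ univ.erase i, ‖A i k‖ * ‖v i‖ := by gcongr; exact hmax _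
    _ = (∑ k ∈ univ.erase i, ‖A i k‖) * ‖v i‖ := (sum_mul ..).symm
    _ < ‖A i i‖ * ‖v i‖ := mul_lt_mul_of_pos_right hstrict (norm_pos_iff.mpr hvi)

lemma norm_apply_eq_of_sum_row_le_diag (hAv : A.mulVec v i = 0) (hmax : ∀ k, ‖v k‖ ≤ ‖v i‖)
    (hweak : ∑ k ∈ univ.erase i, ‖A i k‖ ≤ ‖A i i‖) (hij : A i j ≠ 0) : ‖v j‖ = ‖v i‖ := by
  by_contra hne
  have hlt : ‖v j‖ < ‖v i‖ := (hmax j).lt_of_ne hne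
  have hj : j ∈ univ.erase i := mem_erase.mpr ⟨fun h ↦ hne (h ▸ rfl), mem_univ j⟩
  refine lt_irrefl (‖A i i‖ * ‖v i‖) ?_
  calc
    ‖A i i‖ * ‖v i‖ ≤ ∑ k ∈ univ.erase i, ‖A i k‖ * ‖v k‖ :=
      norm_diag_mul_norm_le_of_mulVec_apply_eq_zero hAv
    _ < ∑ k ∈ univ.erase i, ‖A i k‖ * ‖v i‖ :=
      sum_lt_sum (fun k _ ↦ mul_le_mul_of_nonneg_left (hmax k) (norm_nonneg _))
        ⟨j, hj, mul_lt_mul_of_pos_left hlt (norm_pos_iff.mpr hij)⟩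
    _ = (∑ k ∈ univ.erase i, ‖A i k‖) * ‖v i‖ := (sum_mul ..).symm
    _ ≤ ‖A i i‖ * ‖v i‖ := mul_le_mul_of_nonneg_right hweak (norm_nonneg _)

lemma norm_apply_eq_of_reflTransGen (hAv : A.mulVec v = 0) (hmax : ∀ k, ‖v k‖ ≤ ‖v i‖)
    (hweak : ∀ a, ∑ k ∈ univ.erase a, ‖A a k‖ ≤ ‖A a a‖)
    (hpath : Relation.ReflTransGen (fun a b ↦ A a b ≠ 0) i j) : ‖v j‖ = ‖v i‖ := by
  induction hpath with
  | refl => rfl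
  | @tail b c _ hbc hb =>
    exact (norm_apply_eq_of_sum_row_le_diag (congrFun hAv b) (hb ▸ hmax) (hweak b) hbc).trans hb

theorem eq_zero_of_mulVec_eq_zero_of_chained_dominance
    (hweak : ∀ a, ∑ k ∈ univ.erase a, ‖A a k‖ ≤ ‖A a a‖)
    (hchain : ∀ i, ∃ j, Relation.ReflTransGen (fun a b ↦ A a b ≠ 0) i j ∧
      ∑ k ∈ univ.erase j, ‖A j k‖ < ‖A j j‖)
    (hAv : A.mulVec v = 0) : v = 0 := by
  funext k
  have : Nonempty n := ⟨k⟩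
  obtain ⟨i, hi⟩ := Finite.exists_max (‖v ·‖)
  obtain ⟨j, hpath, hstrict⟩ := hchain i
  have hj : ∀ k, ‖v k‖ ≤ ‖v j‖ := norm_apply_eq_of_reflTransGen hAv hi hweak hpath ▸ hi
  have hvj : v j = 0 := apply_eq_zero_of_sum_row_lt_diag (congrFun hAv j) hj hstrict
  exact norm_le_zero_iff.mp ((hj k).trans_eq (norm_eq_zero.mpr hvj))

end Kernel

theorem wcdd_nonsingular_general {R n : Type*} [NormedCommRing R] [NormMulClass R] [Nontrivial R]
    [Fintype n] [DecidableEq n] {A : Matrix n n R}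
    (hweak : ∀ a, ∑ k ∈ univ.erase a, ‖A a k‖ ≤ ‖A a a‖)
    (hchain : ∀ i, ∃ j, Relation.ReflTransGen (fun a b ↦ A a b ≠ 0) i j ∧
      ∑ k ∈ univ.erase j, ‖A j k‖ < ‖A j j‖) :
    A.det ≠ 0 := by
  have : IsDomain R := NoZeroDivisors.to_isDomain R
  intro hdet
  obtain ⟨v, hv, hAv⟩ := Matrix.exists_mulVec_eq_zero_iff.mpr hdet
  exact hv (eq_zero_of_mulVec_eq_zero_of_chained_dominance hweak hchain hAv)

/-- Every weakly chained diagonally dominant real `M × M` matrix is nonsingular. -/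
theorem wcdd_nonsingular {M : ℕ} (A : Matrix (Fin M) (Fin M) ℝ) (hA : A.WCDD) :
    A.det ≠ 0 :=
  wcdd_nonsingular_general hA.1 fun i ↦
    (hA.2 i).imp fun _ ⟨hpath, hstrict⟩ ↦ ⟨hpath.lift id fun _ _ hedge ↦ hedge.2, hstrict⟩
end

section
/- If a real M×M matrix A is a weakly chained diagonally dominant Z-matrix with nonnegative diagonal entries, then A is nonsingular and every entry of A⁻¹ is nonnegative. -/
open Finset

/-- `A` is a Z-matrix: `a_{ij} ≤ 0` whenever `i ≠ j`. -/
def Matrix.ZMat {M : ℕ} (A : Matrix (Fin M) (Fin M) ℝ) : Prop :=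
  ∀ i j, i ≠ j → A i j ≤ 0

/-!
Suppose `0 ≤ A *ᵥ v` and that the minimum of `v` is negative. In a row where the minimum is
attained, the sign pattern of `A` forces the row sum to vanish and `v` to be minimal at every
out-neighbour of that row. Following a path to a strictly dominant row, whose sum is positive, is
therefore impossible, so `0 ≤ v`. Applied to `±v` with `A *ᵥ v = 0` this minimum principle makes `A`
injective, and applied to the columns of `A⁻¹` it makes them nonnegative.
-/

open scoped Matrix

section Row

variable {n R : Type*}

theorem dotProduct_eq_sum_mul_add [Fintype n] [Ring R] (a v : n → R) (m : R) :
    a ⬝ᵥ v = (∑ j, a j) * m + ∑ j, a j * (v j - m) := by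
  simp only [dotProduct, mul_sub, sum_sub_distrib, sum_mul, add_sub_cancel]

theorem abs_sub_sum_erase_abs_eq_sum [Fintype n] [DecidableEq n] [AddCommGroup R] [LinearOrder R]
    [IsOrderedAddMonoid R] {a : n → R} {i : n} (hoff : ∀ j, i ≠ j → a j ≤ 0) (hi : 0 ≤ a i) :
    |a i| - ∑ j ∈ univ.erase i, |a j| = ∑ j, a j := by
  have habs : ∑ j ∈ univ.erase i, |a j| = -∑ j ∈ univ.erase i, a j := by
    rw [← sum_neg_distrib]
    exact sum_congr rfl fun j hj ↦ abs_of_nonpos (hoff j (ne_of_mem_erase hj).symm)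
  rw [habs, abs_of_nonneg hi, sub_neg_eq_add, add_sum_erase _ _ (mem_univ i)]

section OrderedRing

variable [Ring R] [PartialOrder R] [IsOrderedRing R] {a v : n → R} {i : n}

theorem mul_sub_min_nonpos (hoff : ∀ j, i ≠ j → a j ≤ 0) (hmin : ∀ j, v i ≤ v j) (j : n) :
    a j * (v j - v i) ≤ 0 := by
  obtain rfl | hij := eq_or_ne i j
  · simp
  · exact mul_nonpos_of_nonpos_of_nonneg (hoff j hij) (sub_nonneg.2 (hmin j))

theorem dotProduct_le_sum_mul_min [Fintype n] (hoff : ∀ j, i ≠ j → a j ≤ 0)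
    (hmin : ∀ j, v i ≤ v j) : a ⬝ᵥ v ≤ (∑ j, a j) * v i := by
  rw [dotProduct_eq_sum_mul_add a v (v i)]
  exact add_le_of_nonpos_right (sum_nonpos fun j _ ↦ mul_sub_min_nonpos hoff hmin j)

theorem eq_min_of_dotProduct_nonneg [Fintype n] [NoZeroDivisors R]
    (hoff : ∀ j, i ≠ j → a j ≤ 0) (hmin : ∀ j, v i ≤ v j) (hnonpos : v i ≤ 0)
    (hsum : 0 ≤ ∑ j, a j) (hav : 0 ≤ a ⬝ᵥ v) {j : n} (hj : a j ≠ 0) : v j = v i := by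
  have hterm : ∀ k ∈ univ, a k * (v k - v i) ≤ 0 := fun k _ ↦ mul_sub_min_nonpos hoff hmin k
  have hzero : ∑ k, a k * (v k - v i) = 0 := by
    refine le_antisymm (sum_nonpos hterm) ?_
    calc 0 ≤ a ⬝ᵥ v := hav
      _ = (∑ k, a k) * v i + ∑ k, a k * (v k - v i) := dotProduct_eq_sum_mul_add a v (v i)
      _ ≤ ∑ k, a k * (v k - v i) :=
        add_le_of_nonpos_left (mul_nonpos_of_nonneg_of_nonpos hsum hnonpos)
  have hjzero := (sum_eq_zero_iff_of_nonpos hterm).1 hzero j (mem_univ j)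
  exact sub_eq_zero.1 ((mul_eq_zero.1 hjzero).resolve_left hj)

end OrderedRing

theorem sum_nonpos_of_dotProduct_nonneg [Fintype n] [Ring R] [LinearOrder R]
    [IsStrictOrderedRing R] {a v : n → R} {i : n} (hoff : ∀ j, i ≠ j → a j ≤ 0)
    (hmin : ∀ j, v i ≤ v j) (hneg : v i < 0) (hav : 0 ≤ a ⬝ᵥ v) : ∑ j, a j ≤ 0 :=
  nonpos_of_mul_nonneg_left (hav.trans (dotProduct_le_sum_mul_min hoff hmin)) hneg

end Row

section InverseMonotone

variable {n R : Type*} [Fintype n]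

/-- `A` is inverse monotone (monotone in the sense of Collatz): `A *ᵥ v` is entrywise nonnegative
only if `v` is. Phrasing this without `A⁻¹` lets nonsingularity be derived from it. -/
def IsInverseMonotone [NonUnitalNonAssocSemiring R] [LE R] (A : Matrix n n R) : Prop :=
  ∀ v : n → R, 0 ≤ A *ᵥ v → 0 ≤ v

namespace IsInverseMonotone

variable [DecidableEq n] [CommRing R] [PartialOrder R] {A : Matrix n n R}

theorem det_ne_zero [IsDomain R] [IsOrderedAddMonoid R] (hA : IsInverseMonotone A) :
    A.det ≠ 0 := by
  intro hdet
  obtain ⟨v, hv, hAv⟩ := Matrix.exists_mulVec_eq_zero_iff.2 hdet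
  have hnonneg : 0 ≤ v := hA v hAv.ge
  have hnonpos : 0 ≤ -v := hA (-v) (by rw [Matrix.mulVec_neg, hAv, neg_zero])
  exact hv (le_antisymm (neg_nonneg.1 hnonpos) hnonneg)

theorem inv_mulVec_nonneg (hA : IsInverseMonotone A) (hdet : IsUnit A.det) {w : n → R}
    (hw : 0 ≤ w) : 0 ≤ A⁻¹ *ᵥ w :=
  hA _ <| by rwa [Matrix.mulVec_mulVec, Matrix.mul_nonsing_inv A hdet, Matrix.one_mulVec]

theorem inv_apply_nonneg [ZeroLEOneClass R] (hA : IsInverseMonotone A) (hdet : IsUnit A.det)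
    (i j : n) : 0 ≤ A⁻¹ i j := by
  have hcol := hA.inv_mulVec_nonneg hdet (Pi.single_nonneg.2 (zero_le_one' R) : 0 ≤ Pi.single j 1)
  rw [Matrix.mulVec_single_one] at hcol
  exact hcol i

end IsInverseMonotone

theorem isInverseMonotone_of_sum_row_nonneg [Ring R] [LinearOrder R] [IsStrictOrderedRing R]
    {A : Matrix n n R} (hoff : ∀ i j, i ≠ j → A i j ≤ 0) (hsum : ∀ i, 0 ≤ ∑ j, A i j)
    (hpath : ∀ i, ∃ j, Relation.ReflTransGen (fun k l ↦ A k l ≠ 0) i j ∧ 0 < ∑ k, A j k) :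
    IsInverseMonotone A := by
  intro v hAv i
  by_contra! hi
  have : Nonempty n := ⟨i⟩
  obtain ⟨k, hmin⟩ := Finite.exists_min v
  have hneg : v k < 0 := (hmin i).trans_lt hi
  have hmin_of_eq {l : n} (hl : v l = v k) (j : n) : v l ≤ v j := hl ▸ hmin j
  have hreach {l : n} (hkl : Relation.ReflTransGen (fun k l ↦ A k l ≠ 0) k l) : v l = v k := by
    induction hkl with
    | refl => rfl
    | @tail l j _ hlj hl =>
      have hj : v j = v l :=
        eq_min_of_dotProduct_nonneg (hoff l) (hmin_of_eq hl) (hl ▸ hneg.le) (hsum l) (hAv l) hlj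
      exact hj.trans hl
  obtain ⟨j, hkj, hpos⟩ := hpath k
  have hj : v j = v k := hreach hkj
  exact hpos.not_ge <|
    sum_nonpos_of_dotProduct_nonneg (hoff j) (hmin_of_eq hj) (hj ▸ hneg) (hAv j)

end InverseMonotone

theorem wcdd_zmatrix_inverse_nonneg_general {n K : Type*} [Fintype n] [DecidableEq n] [Field K]
    [LinearOrder K] [IsStrictOrderedRing K] (A : Matrix n n K)
    (hwdd : ∀ i, ∑ j ∈ univ.erase i, |A i j| ≤ |A i i|)
    (hchain : ∀ i, ∃ j, Relation.ReflTransGen (fun k l ↦ k ≠ l ∧ A k l ≠ 0) i j ∧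
      ∑ k ∈ univ.erase j, |A j k| < |A j j|)
    (hZ : ∀ i j, i ≠ j → A i j ≤ 0) (hdiag : ∀ i, 0 ≤ A i i) :
    A.det ≠ 0 ∧ ∀ i j, 0 ≤ A⁻¹ i j := by
  have hrow (i : n) : |A i i| - ∑ j ∈ univ.erase i, |A i j| = ∑ j, A i j :=
    abs_sub_sum_erase_abs_eq_sum (hZ i) (hdiag i)
  have hmono : IsInverseMonotone A := by
    have hsum (i : n) : 0 ≤ ∑ j, A i j := hrow i ▸ sub_nonneg.2 (hwdd i)
    refine isInverseMonotone_of_sum_row_nonneg hZ hsum fun i ↦ ?_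
    obtain ⟨j, hij, hj⟩ := hchain i
    exact ⟨j, Relation.ReflTransGen.mono (fun _ _ ↦ And.right) _ _ hij, hrow j ▸ sub_pos.2 hj⟩
  exact ⟨hmono.det_ne_zero, hmono.inv_apply_nonneg hmono.det_ne_zero.isUnit⟩

/-- A weakly chained diagonally dominant Z-matrix with nonnegative diagonal entries is
nonsingular and has an entrywise nonnegative inverse. -/
theorem wcdd_zmatrix_inverse_nonneg {M : ℕ} (A : Matrix (Fin M) (Fin M) ℝ)
    (hwcdd : A.WCDD) (hZ : A.ZMat) (hdiag : ∀ i, 0 ≤ A i i) :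
    A.det ≠ 0 ∧ ∀ i j, 0 ≤ A⁻¹ i j :=
  wcdd_zmatrix_inverse_nonneg_general A hwcdd.1 hwcdd.2 hZ hdiag
end

section
/- Let L, B be real M×M matrices and d ∈ {0,1}^M, with D the diagonal matrix with diagonal d. Assume: I − L is a Z-matrix with nonnegative diagonal entries that is strictly diagonally dominant in every row; I − B is a Z-matrix with nonnegative diagonal entries that is weakly diagonally dominant; and for every index i with d_i = 1 there is a directed path in the graph of B from i to some index j with d_j = 0. Then the matrix A = (I − D)(I − L) + D(I − B) is a weakly chained diagonally dominant Z-matrix with nonnegative diagonal entries; in particular A is nonsingular and every entry of A⁻¹ is nonnegative. -/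
open Finset

/-!
For a Z-matrix with nonnegative diagonal, weak (strict) diagonal dominance of a row says that its
row sum is nonnegative (positive), so the row sums of `A` are convex combinations of those of
`I - L` and `I - B`. Rows with `d i < 1` are therefore strictly dominant, and a path in the graph
of `B`, cut at its first vertex with `d j < 1`, only leaves vertices whose row in `A` is that of
`I - B`; hence it is a path in the graph of `A`.

Nonsingularity and nonnegativity of the inverse come from a minimum principle: if `A v ≥ 0` and `v`
has a negative minimum, the minimum is also attained at every successor in the graph of `A`, hence
at a strictly dominant row, where it is impossible. So `A v ≥ 0` forces `v ≥ 0`.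
-/

open scoped Matrix

section Monotone

variable {n R : Type*} [Fintype n]

/-- `A` is monotone in the sense of Collatz: `A v ≥ 0` implies `v ≥ 0`, entrywise. -/
def IsMonotoneMatrix [NonUnitalNonAssocSemiring R] [LE R] (A : Matrix n n R) : Prop :=
  ∀ v : n → R, 0 ≤ A *ᵥ v → 0 ≤ v

namespace IsMonotoneMatrix

variable [DecidableEq n]

theorem det_ne_zero [CommRing R] [IsDomain R] [PartialOrder R] [IsOrderedAddMonoid R]
    {A : Matrix n n R} (hA : IsMonotoneMatrix A) : A.det ≠ 0 := by
  intro hdet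
  obtain ⟨v, hv, hAv⟩ := Matrix.exists_mulVec_eq_zero_iff.2 hdet
  have hv_nonneg : 0 ≤ v := hA v hAv.ge
  have hv_nonpos : 0 ≤ -v := hA (-v) (by rw [Matrix.mulVec_neg, hAv, neg_zero])
  exact hv (le_antisymm (neg_nonneg.1 hv_nonpos) hv_nonneg)

theorem inv_nonneg [Field R] [PartialOrder R] [IsOrderedRing R] {A : Matrix n n R}
    (hA : IsMonotoneMatrix A) (i j : n) : 0 ≤ A⁻¹ i j := by
  have hmul : A * A⁻¹ = 1 := Matrix.mul_nonsing_inv A hA.det_ne_zero.isUnit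
  have hcol : A *ᵥ (A⁻¹).col j = Pi.single j 1 := by
    rw [← Matrix.mulVec_single_one, Matrix.mulVec_mulVec, hmul, Matrix.one_mulVec]
  exact hA _ (hcol ▸ Pi.single_nonneg.2 zero_le_one) i

end IsMonotoneMatrix

theorem mulVec_apply_eq_sum_mul_sub_add [CommRing R] (A : Matrix n n R) (v : n → R) (i : n) :
    (A *ᵥ v) i = ∑ j, A i j * (v j - v i) + (∑ j, A i j) * v i := by
  simp only [Matrix.mulVec, dotProduct, mul_sub, sum_sub_distrib, sum_mul, sub_add_cancel]

end Monotone

theorem exists_reflTransGen_of_forall_not_imp {α : Type*} {r s : α → α → Prop} {p : α → Prop}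
    (hrs : ∀ a b, ¬p a → r a b → s a b) {a b : α} (hab : Relation.ReflTransGen r a b) (hb : p b) :
    ∃ c, Relation.ReflTransGen s a c ∧ p c := by
  induction hab using Relation.ReflTransGen.head_induction_on with
  | refl => exact ⟨b, .refl, hb⟩
  | @head a a' haa' _ ih =>
    by_cases ha : p a
    · exact ⟨a, .refl, ha⟩
    · exact ih.imp fun c ⟨ha'c, hc⟩ => ⟨.head (hrs a a' ha haa') ha'c, hc⟩

section LMatrix

variable {M : ℕ} {A : Matrix (Fin M) (Fin M) ℝ} {v : Fin M → ℝ} {i j : Fin M}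

theorem mul_sub_nonpos_of_forall_le (hA : A.ZMat) (hmin : ∀ k, v i ≤ v k) (j : Fin M) :
    A i j * (v j - v i) ≤ 0 := by
  obtain rfl | hij := eq_or_ne i j
  · simp
  · exact mul_nonpos_of_nonpos_of_nonneg (hA i j hij) (sub_nonneg.2 (hmin j))

theorem nonneg_of_forall_le_of_sum_row_pos (hA : A.ZMat) (hrow : 0 < ∑ j, A i j)
    (hmin : ∀ k, v i ≤ v k) (hAv : 0 ≤ (A *ᵥ v) i) : 0 ≤ v i := by
  have hsum : ∑ j, A i j * (v j - v i) ≤ 0 :=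
    sum_nonpos fun j _ => mul_sub_nonpos_of_forall_le hA hmin j
  rw [mulVec_apply_eq_sum_mul_sub_add] at hAv
  exact nonneg_of_mul_nonneg_right (by linarith) hrow

theorem eq_of_graphEdge_of_forall_le (hA : A.ZMat) (hrow : 0 ≤ ∑ j, A i j)
    (hmin : ∀ k, v i ≤ v k) (hvi : v i ≤ 0) (hAv : 0 ≤ (A *ᵥ v) i) (hij : A.GraphEdge i j) :
    v j = v i := by
  have hterm := mul_sub_nonpos_of_forall_le hA hmin
  have hprod : (∑ j, A i j) * v i ≤ 0 := mul_nonpos_of_nonneg_of_nonpos hrow hvi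
  rw [mulVec_apply_eq_sum_mul_sub_add] at hAv
  have hsum : ∑ j, A i j * (v j - v i) = 0 :=
    le_antisymm (sum_nonpos fun j _ => hterm j) (by linarith)
  have hzero := (sum_eq_zero_iff_of_nonpos fun j _ => hterm j).1 hsum j (mem_univ j)
  exact sub_eq_zero.1 ((mul_eq_zero.1 hzero).resolve_left hij.2)

/-- An L-matrix: a Z-matrix with nonnegative diagonal entries. Some authors require the diagonal
to be positive. -/
structure IsLMatrix (A : Matrix (Fin M) (Fin M) ℝ) : Prop where
  zMat : A.ZMat
  diag_nonneg : ∀ i, 0 ≤ A i i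

namespace IsLMatrix

theorem sum_row_eq (hA : IsLMatrix A) (i : Fin M) :
    ∑ j, A i j = |A i i| - ∑ j ∈ univ.erase i, |A i j| := by
  have hoff : ∑ j ∈ univ.erase i, |A i j| = -∑ j ∈ univ.erase i, A i j := by
    rw [← sum_neg_distrib]
    exact sum_congr rfl fun j hj => abs_of_nonpos (hA.zMat i j (ne_of_mem_erase hj).symm)
  rw [hoff, abs_of_nonneg (hA.diag_nonneg i), sub_neg_eq_add, add_sum_erase _ _ (mem_univ i)]

theorem sddRow_iff (hA : IsLMatrix A) : A.SDDRow i ↔ 0 < ∑ j, A i j := by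
  rw [hA.sum_row_eq, sub_pos, Matrix.SDDRow]

theorem wdd_iff (hA : IsLMatrix A) : A.WDD ↔ ∀ i, 0 ≤ ∑ j, A i j := by
  simp only [hA.sum_row_eq, sub_nonneg, Matrix.WDD]

theorem isMonotoneMatrix (hA : IsLMatrix A) (hW : A.WCDD) : IsMonotoneMatrix A := by
  intro v hAv k
  obtain ⟨i, -, hmin⟩ := exists_min_image univ v ⟨k, mem_univ k⟩
  replace hmin : ∀ k, v i ≤ v k := fun k => hmin k (mem_univ k)
  refine le_trans ?_ (hmin k)
  by_contra! hneg
  obtain ⟨j, hpath, hj⟩ := hW.2 i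
  have hji : v j = v i := by
    clear hj
    induction hpath with
    | refl => rfl
    | @tail a b _ hab ha =>
      rw [← ha] at hmin hneg ⊢
      exact eq_of_graphEdge_of_forall_le hA.zMat (hA.wdd_iff.1 hW.1 a) hmin hneg.le (hAv a) hab
  rw [← hji] at hmin hneg
  exact hneg.not_ge <|
    nonneg_of_forall_le_of_sum_row_pos hA.zMat (hA.sddRow_iff.1 hj) hmin (hAv j)

end IsLMatrix

end LMatrix

theorem graphEdge_one_sub {M : ℕ} (B : Matrix (Fin M) (Fin M) ℝ) :
    (1 - B).GraphEdge = B.GraphEdge := by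
  ext i j
  exact and_congr_right fun hij => by simp [Matrix.one_apply_ne hij]

section CombinedMatrix

variable {n R : Type*} [Fintype n] [DecidableEq n] [Ring R]

/-- The matrix `(I - D) P + D Q` with `D = diagonal d`, which interpolates between the rows of `P`
(where `d i = 0`) and those of `Q` (where `d i = 1`). -/
def combinedMatrix (d : n → R) (P Q : Matrix n n R) : Matrix n n R :=
  (1 - Matrix.diagonal d) * P + Matrix.diagonal d * Q

theorem combinedMatrix_apply (d : n → R) (P Q : Matrix n n R) (i j : n) :
    combinedMatrix d P Q i j = (1 - d i) * P i j + d i * Q i j := by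
  simp [combinedMatrix, sub_mul]

theorem sum_combinedMatrix_row (d : n → R) (P Q : Matrix n n R) (i : n) :
    ∑ j, combinedMatrix d P Q i j = (1 - d i) * ∑ j, P i j + d i * ∑ j, Q i j := by
  simp only [combinedMatrix_apply, sum_add_distrib, mul_sum]

variable {M : ℕ} {P Q : Matrix (Fin M) (Fin M) ℝ} {d : Fin M → ℝ} {i j : Fin M}

theorem isLMatrix_combinedMatrix (hd : ∀ i, d i ∈ Set.Icc 0 1) (hP : IsLMatrix P)
    (hQ : IsLMatrix Q) : IsLMatrix (combinedMatrix d P Q) where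
  zMat i j hij := by
    rw [combinedMatrix_apply]
    exact add_nonpos
      (mul_nonpos_of_nonneg_of_nonpos (sub_nonneg.2 (hd i).2) (hP.zMat i j hij))
      (mul_nonpos_of_nonneg_of_nonpos (hd i).1 (hQ.zMat i j hij))
  diag_nonneg i := by
    rw [combinedMatrix_apply]
    exact add_nonneg (mul_nonneg (sub_nonneg.2 (hd i).2) (hP.diag_nonneg i))
      (mul_nonneg (hd i).1 (hQ.diag_nonneg i))

theorem graphEdge_combinedMatrix_iff (hi : d i = 1) :
    (combinedMatrix d P Q).GraphEdge i j ↔ Q.GraphEdge i j := by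
  simp [Matrix.GraphEdge, combinedMatrix_apply, hi]

theorem sddRow_combinedMatrix (hd : ∀ i, d i ∈ Set.Icc 0 1) (hP : IsLMatrix P) (hQ : IsLMatrix Q)
    (hQW : Q.WDD) (hi : d i < 1) (hPi : P.SDDRow i) : (combinedMatrix d P Q).SDDRow i := by
  rw [(isLMatrix_combinedMatrix hd hP hQ).sddRow_iff, sum_combinedMatrix_row]
  exact add_pos_of_pos_of_nonneg (mul_pos (sub_pos.2 hi) (hP.sddRow_iff.1 hPi))
    (mul_nonneg (hd i).1 (hQ.wdd_iff.1 hQW i))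

theorem wdd_combinedMatrix (hd : ∀ i, d i ∈ Set.Icc 0 1) (hP : IsLMatrix P) (hQ : IsLMatrix Q)
    (hPS : ∀ i, d i < 1 → P.SDDRow i) (hQW : Q.WDD) : (combinedMatrix d P Q).WDD := by
  intro i
  obtain hi | hi := (hd i).2.lt_or_eq
  · exact (sddRow_combinedMatrix hd hP hQ hQW hi (hPS i hi)).le
  · simpa [combinedMatrix_apply, hi] using hQW i

theorem wcdd_combinedMatrix (hd : ∀ i, d i ∈ Set.Icc 0 1) (hP : IsLMatrix P) (hQ : IsLMatrix Q)
    (hPS : ∀ i, d i < 1 → P.SDDRow i) (hQW : Q.WDD)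
    (hpath : ∀ i, d i = 1 → ∃ j, Relation.ReflTransGen Q.GraphEdge i j ∧ d j < 1) :
    (combinedMatrix d P Q).WCDD := by
  refine ⟨wdd_combinedMatrix hd hP hQ hPS hQW, fun i => ?_⟩
  have hsdd : ∀ j, d j < 1 → (combinedMatrix d P Q).SDDRow j := fun j hj =>
    sddRow_combinedMatrix hd hP hQ hQW hj (hPS j hj)
  have hedge : ∀ a b, ¬d a < 1 → Q.GraphEdge a b → (combinedMatrix d P Q).GraphEdge a b :=
    fun a b ha => (graphEdge_combinedMatrix_iff ((hd a).2.eq_of_not_lt ha)).2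
  obtain hi | hi := (hd i).2.lt_or_eq
  · exact ⟨i, .refl, hsdd i hi⟩
  · obtain ⟨j, hij, hj⟩ := hpath i hi
    obtain ⟨k, hik, hk⟩ := exists_reflTransGen_of_forall_not_imp hedge hij hj
    exact ⟨k, hik, hsdd k hk⟩

end CombinedMatrix

theorem combined_matrix_wcdd_general {M : ℕ} {L B : Matrix (Fin M) (Fin M) ℝ} {d : Fin M → ℝ}
    (hd : ∀ i, d i ∈ Set.Icc 0 1)
    (hL : IsLMatrix (1 - L)) (hLsdd : ∀ i, d i < 1 → (1 - L).SDDRow i)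
    (hB : IsLMatrix (1 - B)) (hBwdd : (1 - B).WDD)
    (hpath : ∀ i, d i = 1 → ∃ j, Relation.ReflTransGen B.GraphEdge i j ∧ d j < 1) :
    (combinedMatrix d (1 - L) (1 - B)).ZMat ∧
    (∀ i, 0 ≤ combinedMatrix d (1 - L) (1 - B) i i) ∧
    (combinedMatrix d (1 - L) (1 - B)).WCDD ∧
    (combinedMatrix d (1 - L) (1 - B)).det ≠ 0 ∧
    ∀ i j, 0 ≤ (combinedMatrix d (1 - L) (1 - B))⁻¹ i j := by
  have hA := isLMatrix_combinedMatrix hd hL hB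
  have hW : (combinedMatrix d (1 - L) (1 - B)).WCDD :=
    wcdd_combinedMatrix hd hL hB hLsdd hBwdd (by rwa [graphEdge_one_sub])
  have hmono := hA.isMonotoneMatrix hW
  exact ⟨hA.zMat, hA.diag_nonneg, hW, hmono.det_ne_zero, hmono.inv_nonneg⟩

/-- Let `L, B` be real `M × M` matrices and `d ∈ {0,1}^M`, `D = diagonal d`.  If `I − L` is a
Z-matrix with nonnegative diagonal that is strictly diagonally dominant in every row, `I − B`
is a weakly diagonally dominant Z-matrix with nonnegative diagonal, and from every index `i`
with `d i = 1` there is a directed path in the graph of `B` to an index `j` with `d j = 0`,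
then `A = (I − D)(I − L) + D(I − B)` is a weakly chained diagonally dominant Z-matrix with
nonnegative diagonal entries; in particular `A` is nonsingular and `A⁻¹` is entrywise
nonnegative. -/
theorem combined_matrix_wcdd {M : ℕ} (L B : Matrix (Fin M) (Fin M) ℝ) (d : Fin M → ℝ)
    (hd : ∀ i, d i = 0 ∨ d i = 1)
    (hLZ : (1 - L).ZMat) (hLdiag : ∀ i, 0 ≤ (1 - L) i i) (hLsdd : ∀ i, (1 - L).SDDRow i)
    (hBZ : (1 - B).ZMat) (hBdiag : ∀ i, 0 ≤ (1 - B) i i) (hBwdd : (1 - B).WDD)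
    (hpath : ∀ i, d i = 1 →
      ∃ j, Relation.ReflTransGen B.GraphEdge i j ∧ d j = 0) :
    ((1 - Matrix.diagonal d) * (1 - L) + Matrix.diagonal d * (1 - B)).ZMat ∧
    (∀ i, 0 ≤ ((1 - Matrix.diagonal d) * (1 - L) + Matrix.diagonal d * (1 - B)) i i) ∧
    ((1 - Matrix.diagonal d) * (1 - L) + Matrix.diagonal d * (1 - B)).WCDD ∧
    ((1 - Matrix.diagonal d) * (1 - L) + Matrix.diagonal d * (1 - B)).det ≠ 0 ∧
    (∀ i j, 0 ≤ ((1 - Matrix.diagonal d) * (1 - L) + Matrix.diagonal d * (1 - B))⁻¹ i j) :=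
  combined_matrix_wcdd_general (fun i => by rcases hd i with h | h <;> simp [h])
    ⟨hLZ, hLdiag⟩ (fun i _ => hLsdd i) ⟨hBZ, hBdiag⟩ hBwdd
    fun i hi => (hpath i hi).imp fun _ ⟨hij, hj⟩ => ⟨hij, hj.trans_lt one_pos⟩
end

section
/- For every grid point (i, j) with d(i, j) = 1 there is a directed path along the edges (i, j) → (i, j + z(i, j)) (taken only at points where d = 1 would allow continuation, i.e., following the impulse moves) from (i, j) to some grid point (i, j′) with d(i, j′) = 0. Precisely: define a directed graph on G with an edge from (i, j) to (i, j + z(i, j)) for every (i, j) ∈ G with |j + z(i, j)| ≤ Q̄; then from every (i, j) with d(i, j) = 1 there is a directed path in this graph to some (i, j′) with d(i, j′) = 0. -/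
/-! An impulse that leads to another impulse is followed by one in the same direction: a reversal
would put a buy next to a sell. So as long as no impulse-free point is met, the path is an
arithmetic progression whose step has infinite order, which cannot stay in a finite column. -/

/-- An admissible impulse control on a single column of the grid, with inventory levels `J` and
lot size `v`: `d` marks the levels where an impulse is applied, `z` gives its signed size. The
boundary conditions are encoded in `add_mem`: no impulse leaves `J`. -/
structure IsAdmissibleImpulse {M : Type*} [AddGroup M] (v : M) (J : Set M)
    (d : M → Bool) (z : M → M) : Prop where
  eq_or_eq_neg : ∀ j ∈ J, d j = true → z j = v ∨ z j = -v
  add_mem : ∀ j ∈ J, d j = true → j + z j ∈ J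
  not_buy_sell : ∀ j ∈ J, ¬(d j = true ∧ z j = v ∧ d (j + v) = true ∧ z (j + v) = -v)

/-- The directed graph of impulse moves on a single column with levels `J`. -/
def ImpulseEdge {M : Type*} [Add M] (J : Set M) (z : M → M) (j k : M) : Prop :=
  j ∈ J ∧ k = j + z j ∧ j + z j ∈ J

theorem exists_add_nsmul_notMem {M : Type*} [AddLeftCancelMonoid M] {J : Set M}
    (hJ : J.Finite) (j : M) {v : M} (hv : ¬IsOfFinAddOrder v) : ∃ n : ℕ, j + n • v ∉ J := by
  by_contra! hmem
  have hinj : Function.Injective fun n : ℕ => j + n • v :=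
    (add_right_injective j).comp (injective_nsmul_iff_not_isOfFinAddOrder.mpr hv)
  exact Set.infinite_of_injective_forall_mem hinj hmem hJ

namespace IsAdmissibleImpulse

variable {M : Type*} [AddGroup M] {v : M} {J : Set M} {d : M → Bool} {z : M → M} {j : M}

theorem direction_add_eq (h : IsAdmissibleImpulse v J d z) (hj : j ∈ J) (hd : d j = true)
    (hd' : d (j + z j) = true) : z (j + z j) = z j := by
  have hj' := h.add_mem j hj hd
  have hz' := h.eq_or_eq_neg _ hj' hd'
  rcases h.eq_or_eq_neg j hj hd with buy | sell
  · rw [buy] at hd' hz' ⊢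
    exact hz'.resolve_right fun sell' => h.not_buy_sell j hj ⟨hd, buy, hd', sell'⟩
  · rw [sell] at hj' hd' hz' ⊢
    refine hz'.resolve_left fun buy' => h.not_buy_sell _ hj' ⟨hd', buy', ?_⟩
    rw [neg_add_cancel_right]
    exact ⟨hd, sell⟩

theorem reflTransGen_add_nsmul (h : IsAdmissibleImpulse v J d z) (hj : j ∈ J)
    (hreach : ∀ k ∈ J, Relation.ReflTransGen (ImpulseEdge J z) j k → d k = true) (n : ℕ) :
    j + n • z j ∈ J ∧ z (j + n • z j) = z j ∧
      Relation.ReflTransGen (ImpulseEdge J z) j (j + n • z j) := by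
  induction n with
  | zero => simpa using ⟨hj, .refl⟩
  | succ n ih =>
    obtain ⟨hmem, hdir, hpath⟩ := ih
    have himpulse := hreach _ hmem hpath
    have hmem' := h.add_mem _ hmem himpulse
    have hpath' := hpath.tail ⟨hmem, rfl, hmem'⟩
    have hdir' := h.direction_add_eq hmem himpulse (hreach _ hmem' hpath')
    have hnext : j + n • z j + z (j + n • z j) = j + (n + 1) • z j := by
      rw [hdir, succ_nsmul, add_assoc]
    rw [hnext] at hmem' hpath' hdir'
    exact ⟨hmem', hdir'.trans hdir, hpath'⟩

theorem exists_reflTransGen_eq_false (h : IsAdmissibleImpulse v J d z)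
    (hv : ¬IsOfFinAddOrder v) (hJ : J.Finite) (hj : j ∈ J) :
    ∃ k, Relation.ReflTransGen (ImpulseEdge J z) j k ∧ k ∈ J ∧ d k = false := by
  by_contra! hnone
  have hreach : ∀ k ∈ J, Relation.ReflTransGen (ImpulseEdge J z) j k → d k = true :=
    fun k hk hpath => Bool.eq_true_of_not_eq_false (hnone k hpath hk)
  have hz : ¬IsOfFinAddOrder (z j) := by
    rcases h.eq_or_eq_neg j hj (hreach j hj .refl) with buy | sell
    · exact buy ▸ hv
    · exact sell ▸ mt isOfFinAddOrder_neg_iff.mp hv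
  obtain ⟨n, hn⟩ := exists_add_nsmul_notMem hJ j hz
  exact hn (h.reflTransGen_add_nsmul hj hreach n).1

end IsAdmissibleImpulse

theorem finite_setOf_abs_le (Q : ℤ) : {j : ℤ | |j| ≤ Q}.Finite :=
  (Set.finite_Icc (-Q) Q).subset fun _ hj => abs_le.mp hj

theorem isAdmissibleImpulse_setOf_abs_le {Q : ℤ} {d : ℤ → Bool} {z : ℤ → ℤ}
    (hz : ∀ j, |j| ≤ Q → d j = true → z j = 1 ∨ z j = -1)
    (hbuy : ∀ j, |j| ≤ Q → d j = true → z j = 1 → j < Q)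
    (hsell : ∀ j, |j| ≤ Q → d j = true → z j = -1 → -Q < j)
    (hc : ∀ j, |j| ≤ Q → ¬(d j = true ∧ z j = 1 ∧ d (j + 1) = true ∧ z (j + 1) = -1)) :
    IsAdmissibleImpulse 1 {j | |j| ≤ Q} d z where
  eq_or_eq_neg := hz
  add_mem j hj hd := by
    have hdir := hz j hj hd
    have hlt := hbuy j hj hd
    have hgt := hsell j hj hd
    rw [Set.mem_ofPred_eq, abs_le] at hj ⊢
    omega
  not_buy_sell := hc

theorem impulse_graph_reaches_no_impulse_general {ι M : Type*} [AddGroup M]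
    {v : M} (hv : ¬IsOfFinAddOrder v) {I : Set ι} {J : Set M} (hJ : J.Finite)
    {d : ι × M → Bool} {z : ι × M → M}
    (h : ∀ i ∈ I, IsAdmissibleImpulse v J (fun j => d (i, j)) (fun j => z (i, j)))
    (p : ι × M) (hi : p.1 ∈ I) (hj : p.2 ∈ J) :
    ∃ p' : ι × M,
      Relation.ReflTransGen
        (fun a b : ι × M => a.1 ∈ I ∧ a.2 ∈ J ∧ b = (a.1, a.2 + z a) ∧ a.2 + z a ∈ J) p p' ∧
      p'.1 ∈ I ∧ p'.2 ∈ J ∧ d p' = false := by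
  obtain ⟨k, hpath, hk, hdk⟩ := (h p.1 hi).exists_reflTransGen_eq_false hv hJ hj
  refine ⟨(p.1, k), hpath.lift (Prod.mk p.1) ?_, hi, hk, hdk⟩
  rintro a b ⟨ha, hb, hmem⟩
  exact ⟨hi, ha, congrArg (Prod.mk p.1) hb, hmem⟩

/-- Let `G = {(i, j) : |i| ≤ N_α, |j| ≤ Q̄} ⊆ ℤ × ℤ`, `d : G → {0,1}` an impulse indicator and
`z : G → {1, −1}` an impulse direction satisfying the admissibility conditions:
(a) `d = 1, z = 1` forces `j < Q̄`; (b) `d = 1, z = −1` forces `j > −Q̄`; (c) there is no point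
with `d(i,j) = 1, z(i,j) = 1, d(i,j+1) = 1, z(i,j+1) = −1`.  Consider the directed graph on `G`
with an edge from `(i, j)` to `(i, j + z(i,j))` whenever `|j + z(i,j)| ≤ Q̄`.  Then from every
grid point with `d = 1` there is a directed path in this graph to a grid point with `d = 0`. -/
theorem impulse_graph_reaches_no_impulse (Nα : ℕ) (Qb : ℤ) (hQ : 1 ≤ Qb)
    (d : ℤ × ℤ → Bool) (z : ℤ × ℤ → ℤ)
    (hz : ∀ p : ℤ × ℤ, z p = 1 ∨ z p = -1)
    (ha : ∀ p : ℤ × ℤ, |p.1| ≤ (Nα : ℤ) → |p.2| ≤ Qb → d p = true → z p = 1 → p.2 < Qb)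
    (hb : ∀ p : ℤ × ℤ, |p.1| ≤ (Nα : ℤ) → |p.2| ≤ Qb → d p = true → z p = -1 → -Qb < p.2)
    (hc : ∀ p : ℤ × ℤ, |p.1| ≤ (Nα : ℤ) → |p.2| ≤ Qb →
      ¬(d p = true ∧ z p = 1 ∧ d (p.1, p.2 + 1) = true ∧ z (p.1, p.2 + 1) = -1)) :
    ∀ p : ℤ × ℤ, |p.1| ≤ (Nα : ℤ) → |p.2| ≤ Qb → d p = true →
      ∃ p' : ℤ × ℤ,
        Relation.ReflTransGen
          (fun a b : ℤ × ℤ => |a.1| ≤ (Nα : ℤ) ∧ |a.2| ≤ Qb ∧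
            b = (a.1, a.2 + z a) ∧ |a.2 + z a| ≤ Qb) p p' ∧
        |p'.1| ≤ (Nα : ℤ) ∧ |p'.2| ≤ Qb ∧ d p' = false :=
  fun p hi hj _ => impulse_graph_reaches_no_impulse_general (I := {i | |i| ≤ (Nα : ℤ)})
    (not_isOfFinAddOrder_of_isAddTorsionFree one_ne_zero) (finite_setOf_abs_le Qb)
    (fun i hi => isAdmissibleImpulse_setOf_abs_le (fun j _ _ => hz (i, j))
      (fun j => ha (i, j) hi) (fun j => hb (i, j) hi) (fun j => hc (i, j) hi)) p hi hj
end

section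
/- Monotonicity of the implicit scheme: fix n < N and a grid point (αᵢ, q), and let u, w be grid functions with u(t_m, αⱼ, q′) ≥ w(t_m, αⱼ, q′) at every grid point and u(t_n, αᵢ, q) = w(t_n, αᵢ, q). Define, for a grid function v, S[v] := max( max over admissible lᵃ, lᵇ ∈ {0,1} of ( (v(t_{n+1}, αᵢ, q) − v(t_n, αᵢ, q))/δt + L_δ^{lᵃ,lᵇ}v(t_n, αᵢ, q) + f̃^{lᵃ,lᵇ}(t_n, αᵢ, q) ), max over admissible z ∈ {1,−1} of ( B_δ^z v(t_n, αᵢ, q) − Υ ) ). Then S[u] ≥ S[w]. -/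
open Finset

noncomputable section

/-- Clamped linear interpolation on the α-grid `{i·δα : i ∈ ℤ, |i| ≤ Nα}` of a function `f`
on the grid indices: the argument `α` is clamped to `[−A, A]` with `A = Nα·δα` and the value
is then linearly interpolated between the two neighbouring grid points. -/
def interp (δα : ℝ) (Nα : ℕ) (f : ℤ → ℝ) (α : ℝ) : ℝ :=
  let A : ℝ := (Nα : ℝ) * δα
  let β : ℝ := max (-A) (min A α)
  let i0 : ℤ := min ⌊β / δα⌋ ((Nα : ℤ) - 1)
  let θ : ℝ := β / δα - (i0 : ℝ)
  (1 - θ) * f i0 + θ * f (i0 + 1)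

/-- The discrete generator `L_δ^{lᵃ,lᵇ}` acting on a time slice `v` of a grid function,
evaluated at the grid point `(αᵢ, q) = (i·δα, q)`.  Values at off-grid points `αᵢ ± δα`,
`αᵢ + γᵃ`, `αᵢ − γᵇ` are obtained by the clamping-and-interpolation rule, and the
second-difference term is set to zero at the boundary rows `i = ±Nα`. -/
def Lδ (δα k ρ lamA lamB γa γb : ℝ) (Nα : ℕ) (la lb : Bool)
    (v : ℤ → ℤ → ℝ) (i q : ℤ) : ℝ :=
  let α : ℝ := (i : ℝ) * δα
  let V : ℝ → ℤ → ℝ := fun a q' => interp δα Nα (fun j => v j q') a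
  k * max (-α) 0 * (V (α + δα) q - v i q) / δα
    - k * max α 0 * (v i q - V (α - δα) q) / δα
    + (if |i| < (Nα : ℤ) then
        ρ ^ 2 / 2 * (V (α + δα) q - 2 * v i q + V (α - δα) q) / δα ^ 2
      else 0)
    + lamA * ((if la then V (α + γa) (q - 1) else V (α + γa) q) - v i q)
    + lamB * ((if lb then V (α - γb) (q + 1) else V (α - γb) q) - v i q)

/-- The running reward `f̃^{lᵃ,lᵇ}(t, α, q) = α·σ·q − φ·q² + 1_{lᵃ=1}·λᵃ·Δ + 1_{lᵇ=1}·λᵇ·Δ`. -/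
def ftil (σ φ Δ lamA lamB : ℝ) (la lb : Bool) (α : ℝ) (q : ℤ) : ℝ :=
  α * σ * (q : ℝ) - φ * (q : ℝ) ^ 2
    + (if la then lamA * Δ else 0) + (if lb then lamB * Δ else 0)

/-- `S[v]` at the grid node `(t_n, αᵢ, q)`: the maximum (= `sSup` of the finite nonempty set
of candidates) over all admissible limit controls `lᵃ, lᵇ ∈ {0,1}` of
`(v(t_{n+1},αᵢ,q) − v(t_n,αᵢ,q))/δt + L_δ^{lᵃ,lᵇ}v(t_n,αᵢ,q) + f̃^{lᵃ,lᵇ}(t_n,αᵢ,q)`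
and over all admissible impulses `z ∈ {1,−1}` of `B_δ^z v(t_n,αᵢ,q) − Υ`. -/
def SchemeVal (δt δα σ Δ Υ lamA lamB k ρ γa γb φ : ℝ) (Nα : ℕ) (Qb : ℤ)
    (n : ℕ) (i q : ℤ) (v : ℕ → ℤ → ℤ → ℝ) : ℝ :=
  sSup
    ({x : ℝ | ∃ la lb : Bool, (la = true → -Qb < q) ∧ (lb = true → q < Qb) ∧
        x = (v (n + 1) i q - v n i q) / δt
          + Lδ δα k ρ lamA lamB γa γb Nα la lb (v n) i q
          + ftil σ φ Δ lamA lamB la lb ((i : ℝ) * δα) q} ∪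
      {x : ℝ | ∃ z : ℤ, (z = 1 ∨ z = -1) ∧ (z = 1 → q < Qb) ∧ (z = -1 → -Qb < q) ∧
        x = v n i (q + z) - v n i q - Υ})

/-!
Every coefficient that multiplies a value of `v` away from the node `(t_n, αᵢ, q)` in the scheme is
nonnegative: the drift is discretised upwind, the second difference is central, and interpolation
takes convex combinations of grid values. So at a node where `u` touches `w` from above, each
candidate in the maximum for `w` is at most the candidate for `u` with the same control.
-/

/-- `GridLE Nα Qb f g` is the pointwise order `f ≤ g` of two time slices on the nodes `(αⱼ, q)`
of the grid; nothing is said about indices with `|j| > Nα` or `|q| > Qb`. -/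
def GridLE (Nα : ℕ) (Qb : ℤ) (f g : ℤ → ℤ → ℝ) : Prop :=
  ∀ j q : ℤ, |j| ≤ (Nα : ℤ) → |q| ≤ Qb → f j q ≤ g j q

/-- The set of candidates over which `SchemeVal` takes its supremum: the values of the discretised
equation under admissible limit controls, and the net gains of admissible impulses. -/
def schemeCandidates (δt δα σ Δ Υ lamA lamB k ρ γa γb φ : ℝ) (Nα : ℕ) (Qb : ℤ)
    (n : ℕ) (i q : ℤ) (v : ℕ → ℤ → ℤ → ℝ) : Set ℝ :=
  {x : ℝ | ∃ la lb : Bool, (la = true → -Qb < q) ∧ (lb = true → q < Qb) ∧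
      x = (v (n + 1) i q - v n i q) / δt
        + Lδ δα k ρ lamA lamB γa γb Nα la lb (v n) i q
        + ftil σ φ Δ lamA lamB la lb ((i : ℝ) * δα) q} ∪
    {x : ℝ | ∃ z : ℤ, (z = 1 ∨ z = -1) ∧ (z = 1 → q < Qb) ∧ (z = -1 → -Qb < q) ∧
      x = v n i (q + z) - v n i q - Υ}

theorem sub_min_floor_mem_Icc {R : Type*} [Ring R] [LinearOrder R] [IsStrictOrderedRing R]
    [FloorRing R] {x : R} {m : ℤ} (hx : x ≤ m + 1) :
    x - (min ⌊x⌋ m : ℤ) ∈ Set.Icc (0 : R) 1 := by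
  rw [Int.cast_min, Set.mem_Icc, sub_nonneg, sub_le_iff_le_add', ← min_add_add_right]
  exact ⟨(min_le_left _ _).trans (Int.floor_le x), le_min (Int.lt_floor_add_one x).le hx⟩

theorem clamp_div_mem_Icc {K : Type*} [Field K] [LinearOrder K] [IsStrictOrderedRing K]
    {c δ : K} (hc : 0 ≤ c) (hδ : 0 < δ) (a : K) :
    max (-(c * δ)) (min (c * δ) a) / δ ∈ Set.Icc (-c) c := by
  have hcδ : -(c * δ) ≤ c * δ := neg_le_self (mul_nonneg hc hδ.le)
  rw [Set.mem_Icc, le_div_iff₀ hδ, div_le_iff₀ hδ, neg_mul]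
  exact ⟨le_max_left _ _, max_le hcδ (min_le_left _ _)⟩

theorem exists_interp_eq_convexCombination {δα : ℝ} (hδα : 0 < δα) (Nα : ℕ) (α : ℝ) :
    ∃ j j' : ℤ, |j| ≤ (Nα : ℤ) ∧ |j'| ≤ (Nα : ℤ) ∧ ∃ θ ∈ Set.Icc (0 : ℝ) 1,
      ∀ f : ℤ → ℝ, interp δα Nα f α = (1 - θ) * f j + θ * f j' := by
  obtain rfl | hNα := Nα.eq_zero_or_pos
  -- On the one-point grid the left neighbour `-1` is off the grid, but its weight is zero.
  · exact ⟨0, 0, by simp, by simp, 0, by simp, fun f => by simp [interp]⟩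
  obtain ⟨hx_lower, hx_upper⟩ := clamp_div_mem_Icc Nα.cast_nonneg hδα α
  set x : ℝ := max (-(Nα * δα)) (min (Nα * δα) α) / δα
  have hfloor : -(Nα : ℤ) ≤ ⌊x⌋ := Int.le_floor.mpr (by exact_mod_cast hx_lower)
  refine ⟨min ⌊x⌋ (Nα - 1), min ⌊x⌋ (Nα - 1) + 1, abs_le.mpr (by omega), abs_le.mpr (by omega),
    _, sub_min_floor_mem_Icc (by simpa using hx_upper), fun f => rfl⟩

theorem interp_mono {δα : ℝ} (hδα : 0 < δα) {Nα : ℕ} {f g : ℤ → ℝ}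
    (hfg : ∀ j : ℤ, |j| ≤ (Nα : ℤ) → f j ≤ g j) (α : ℝ) :
    interp δα Nα f α ≤ interp δα Nα g α := by
  obtain ⟨j, j', hj, hj', θ, ⟨hθ₀, hθ₁⟩, hinterp⟩ :=
    exists_interp_eq_convexCombination hδα Nα α
  have : 0 ≤ 1 - θ := sub_nonneg.mpr hθ₁
  rw [hinterp, hinterp]
  gcongr
  exacts [hfg j hj, hfg j' hj']

section

variable {δt δα σ Δ Υ lamA lamB k ρ γa γb φ : ℝ} {Nα : ℕ} {Qb i q : ℤ}

theorem Lδ_le_Lδ_of_touching (hδα : 0 < δα) (hk : 0 ≤ k) (hlamA : 0 ≤ lamA) (hlamB : 0 ≤ lamB)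
    {f g : ℤ → ℤ → ℝ} (hfg : GridLE Nα Qb f g) (htouch : g i q = f i q) (hq : |q| ≤ Qb)
    {la lb : Bool} (hla : la = true → -Qb < q) (hlb : lb = true → q < Qb) :
    Lδ δα k ρ lamA lamB γa γb Nα la lb f i q ≤ Lδ δα k ρ lamA lamB γa γb Nα la lb g i q := by
  have hrow (a : ℝ) {q' : ℤ} (hq' : |q'| ≤ Qb) :
      interp δα Nα (fun j => f j q') a ≤ interp δα Nα (fun j => g j q') a :=
    interp_mono hδα (fun j hj => hfg j q' hj hq') a
  have hright := hrow (i * δα + δα) hq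
  have hleft := hrow (i * δα - δα) hq
  obtain ⟨hq_lower, hq_upper⟩ := abs_le.mp hq
  simp only [Lδ, htouch]
  gcongr ?_ - ?_ + ?_ + lamA * (?_ - _) + lamB * (?_ - _)
  · gcongr
  · gcongr
  · split_ifs
    · gcongr
    · rfl
  · split_ifs with h
    · exact hrow _ (abs_le.mpr (by have := hla h; omega))
    · exact hrow _ hq
  · split_ifs with h
    · exact hrow _ (abs_le.mpr (by have := hlb h; omega))
    · exact hrow _ hq

variable {n : ℕ}

theorem schemeCandidates_nonempty (v : ℕ → ℤ → ℤ → ℝ) :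
    (schemeCandidates δt δα σ Δ Υ lamA lamB k ρ γa γb φ Nα Qb n i q v).Nonempty :=
  ⟨_, Or.inl ⟨false, false, by simp, by simp, rfl⟩⟩

theorem schemeCandidates_finite (v : ℕ → ℤ → ℤ → ℝ) :
    (schemeCandidates δt δα σ Δ Υ lamA lamB k ρ γa γb φ Nα Qb n i q v).Finite := by
  refine Set.Finite.union ?_ ?_
  · refine (Set.finite_range fun l : Bool × Bool => (v (n + 1) i q - v n i q) / δt
      + Lδ δα k ρ lamA lamB γa γb Nα l.1 l.2 (v n) i q
      + ftil σ φ Δ lamA lamB l.1 l.2 ((i : ℝ) * δα) q).subset ?_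
    rintro x ⟨la, lb, -, -, rfl⟩
    exact ⟨(la, lb), rfl⟩
  · refine ((Set.toFinite ({1, -1} : Set ℤ)).image
      fun z => v n i (q + z) - v n i q - Υ).subset ?_
    rintro x ⟨z, hz, -, -, rfl⟩
    exact ⟨z, hz, rfl⟩

theorem exists_schemeCandidates_ge (hδt : 0 < δt) (hδα : 0 < δα) (hk : 0 ≤ k)
    (hlamA : 0 ≤ lamA) (hlamB : 0 ≤ lamB) {u w : ℕ → ℤ → ℤ → ℝ}
    (hnow : GridLE Nα Qb (w n) (u n)) (hnext : w (n + 1) i q ≤ u (n + 1) i q)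
    (htouch : u n i q = w n i q) (hi : |i| ≤ (Nα : ℤ)) (hq : |q| ≤ Qb) {x : ℝ}
    (hx : x ∈ schemeCandidates δt δα σ Δ Υ lamA lamB k ρ γa γb φ Nα Qb n i q w) :
    ∃ y ∈ schemeCandidates δt δα σ Δ Υ lamA lamB k ρ γa γb φ Nα Qb n i q u, x ≤ y := by
  obtain ⟨hq_lower, hq_upper⟩ := abs_le.mp hq
  obtain ⟨la, lb, hla, hlb, rfl⟩ | ⟨z, hz, hz_buy, hz_sell, rfl⟩ := hx
  · refine ⟨_, Or.inl ⟨la, lb, hla, hlb, rfl⟩, ?_⟩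
    have hgenerator := Lδ_le_Lδ_of_touching (ρ := ρ) (γa := γa) (γb := γb)
      hδα hk hlamA hlamB hnow htouch hq hla hlb
    rw [htouch]
    gcongr
  · refine ⟨_, Or.inr ⟨z, hz, hz_buy, hz_sell, rfl⟩, ?_⟩
    have hqz : |q + z| ≤ Qb := abs_le.mpr (by omega)
    rw [htouch]
    gcongr
    exact hnow i (q + z) hi hqz

theorem scheme_monotone_general (hδt : 0 < δt) (hδα : 0 < δα) (hk : 0 ≤ k)
    (hlamA : 0 ≤ lamA) (hlamB : 0 ≤ lamB) {u w : ℕ → ℤ → ℤ → ℝ}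
    (hnow : GridLE Nα Qb (w n) (u n)) (hnext : w (n + 1) i q ≤ u (n + 1) i q)
    (htouch : u n i q = w n i q) (hi : |i| ≤ (Nα : ℤ)) (hq : |q| ≤ Qb) :
    SchemeVal δt δα σ Δ Υ lamA lamB k ρ γa γb φ Nα Qb n i q w ≤
      SchemeVal δt δα σ Δ Υ lamA lamB k ρ γa γb φ Nα Qb n i q u := by
  refine csSup_le (schemeCandidates_nonempty w) fun x hx => ?_
  obtain ⟨y, hy, hxy⟩ :=
    exists_schemeCandidates_ge hδt hδα hk hlamA hlamB hnow hnext htouch hi hq hx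
  exact hxy.trans (le_csSup (schemeCandidates_finite u).bddAbove hy)

end

/-- Monotonicity of the implicit scheme: if `u ≥ w` at every grid point and
`u(t_n, αᵢ, q) = w(t_n, αᵢ, q)` at a fixed grid node with `n < N`, then `S[u] ≥ S[w]`
at that node. -/
theorem scheme_monotone
    (T A δt δα σ Δ ε Υ lamA lamB k ρ γa γb φ ψ : ℝ) (N Nα : ℕ) (Qb : ℤ)
    (hT : 0 < T) (hA : 0 < A) (hQ : 1 ≤ Qb) (hσ : 0 < σ) (hΔ : 0 ≤ Δ) (hε : 0 < ε)
    (hΥ : Υ = Δ + ε) (hlamA : 0 < lamA) (hlamB : 0 < lamB) (hk : 0 < k) (hρ : 0 < ρ)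
    (hγa : 0 < γa) (hγb : 0 < γb) (hφ : 0 < φ) (hψ : 0 < ψ)
    (hN : 0 < N) (hδt : δt = T / N) (hδα : 0 < δα) (hNα : (Nα : ℝ) * δα = A)
    (u w : ℕ → ℤ → ℤ → ℝ) (n : ℕ) (hn : n < N) (i q : ℤ)
    (hi : |i| ≤ (Nα : ℤ)) (hq : |q| ≤ Qb)
    (huw : ∀ m : ℕ, m ≤ N → ∀ j q' : ℤ, |j| ≤ (Nα : ℤ) → |q'| ≤ Qb →
      w m j q' ≤ u m j q')
    (heq : u n i q = w n i q) :
    SchemeVal δt δα σ Δ Υ lamA lamB k ρ γa γb φ Nα Qb n i q w ≤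
      SchemeVal δt δα σ Δ Υ lamA lamB k ρ γa γb φ Nα Qb n i q u := by
  have hδt_pos : 0 < δt := hδt ▸ div_pos hT (Nat.cast_pos.mpr hN)
  exact scheme_monotone_general hδt_pos hδα hk.le hlamA.le hlamB.le (huw n hn.le)
    (huw (n + 1) hn i q hi hq) heq hi hq
end
end

section
/- Stability of the implicit scheme: every grid function v satisfying the implicit scheme obeys the uniform bounds U₁(t_n) ≤ v(t_n, αᵢ, q) ≤ U₂(t_n) at every grid point, where U₁(t) = −Υ·Q̄ − ψ·Q̄² − (T − t)·(σ·A·Q̄ + φ·Q̄²) and U₂(t) = (T − t)·(Δ·(λᵃ + λᵇ) + σ·A·Q̄). -/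
open Finset

noncomputable section

/-- The implicit scheme: `v(t_N, αᵢ, q) = g̃(T, αᵢ, q) = −Υ·|q| − ψ·q²` at the terminal time,
and for every `n < N` and every grid point `(αᵢ, q)` the maximum, over all admissible limit
controls `lᵃ, lᵇ ∈ {0,1}` and all admissible impulses `z ∈ {1, −1}`, of
`(v(t_{n+1},αᵢ,q) − v(t_n,αᵢ,q))/δt + L_δ^{lᵃ,lᵇ}v(t_n,αᵢ,q) + f̃^{lᵃ,lᵇ}(t_n,αᵢ,q)` and
`B_δ^z v(t_n,αᵢ,q) − Υ` equals zero (every candidate is `≤ 0` and some candidate is `= 0`). -/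
def SchemeSol (δt δα σ Δ Υ lamA lamB k ρ γa γb φ ψ : ℝ) (N Nα : ℕ) (Qb : ℤ)
    (v : ℕ → ℤ → ℤ → ℝ) : Prop :=
  (∀ i q : ℤ, |i| ≤ (Nα : ℤ) → |q| ≤ Qb →
    v N i q = -Υ * |(q : ℝ)| - ψ * (q : ℝ) ^ 2) ∧
  ∀ n : ℕ, n < N → ∀ i q : ℤ, |i| ≤ (Nα : ℤ) → |q| ≤ Qb →
    (∀ la lb : Bool, (la = true → -Qb < q) → (lb = true → q < Qb) →
      (v (n + 1) i q - v n i q) / δt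
        + Lδ δα k ρ lamA lamB γa γb Nα la lb (v n) i q
        + ftil σ φ Δ lamA lamB la lb ((i : ℝ) * δα) q ≤ 0) ∧
    (∀ z : ℤ, (z = 1 ∨ z = -1) → (z = 1 → q < Qb) → (z = -1 → -Qb < q) →
      v n i (q + z) - v n i q - Υ ≤ 0) ∧
    ((∃ la lb : Bool, (la = true → -Qb < q) ∧ (lb = true → q < Qb) ∧
        (v (n + 1) i q - v n i q) / δt
          + Lδ δα k ρ lamA lamB γa γb Nα la lb (v n) i q
          + ftil σ φ Δ lamA lamB la lb ((i : ℝ) * δα) q = 0) ∨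
      (∃ z : ℤ, (z = 1 ∨ z = -1) ∧ (z = 1 → q < Qb) ∧ (z = -1 → -Qb < q) ∧
        v n i (q + z) - v n i q - Υ = 0))

/-!
This is the discrete maximum principle. Upwinding writes the generator as a combination, with
nonnegative coefficients, of increments `interp v - v i q`, and interpolation averages grid values,
so the generator is nonpositive at a grid maximum and nonnegative at a grid minimum. At a maximum
an impulse, which pays `Υ > 0` to reach another grid value, cannot be optimal, so one of the
implicit Euler equations holds there. Hence one backward time step raises the maximum by at most
`δt` times the largest running reward; testing the minimum without quoting lowers it by at most
`δt` times the largest running loss.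
-/

section Interpolation

lemma abs_cell_le {n : ℕ} (hn : 0 < n) {x : ℝ} (hx : |x| ≤ n) :
    |min ⌊x⌋ ((n : ℤ) - 1)| ≤ n ∧ |min ⌊x⌋ ((n : ℤ) - 1) + 1| ≤ n := by
  have hfloor : -(n : ℤ) ≤ ⌊x⌋ := Int.le_floor.2 (by exact_mod_cast (abs_le.1 hx).1)
  constructor <;> rw [abs_le] <;> omega

-- Capping the cell index at `n - 1` makes the right endpoint `x = n` the case of weight `1`.
lemma sub_cell_mem_Icc {n : ℕ} {x : ℝ} (hx : x ≤ n) :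
    x - (min ⌊x⌋ ((n : ℤ) - 1) : ℤ) ∈ Set.Icc (0 : ℝ) 1 := by
  push_cast
  constructor
  · linarith [min_le_left (⌊x⌋ : ℝ) (n - 1), Int.floor_le x]
  · rcases min_choice (⌊x⌋ : ℝ) (n - 1) with h | h <;> linarith [Int.lt_floor_add_one x]

lemma abs_clamp_div_le {δα : ℝ} (hδα : 0 < δα) (Nα : ℕ) (α : ℝ) :
    |max (-(Nα * δα)) (min (Nα * δα) α) / δα| ≤ Nα := by
  have hA : 0 ≤ Nα * δα := by positivity
  rw [abs_div, abs_of_pos hδα, div_le_iff₀ hδα]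
  exact abs_le.2 ⟨le_max_left _ _, max_le (by linarith) (min_le_left _ _)⟩

lemma interp_mem_of_convex {δα : ℝ} (hδα : 0 < δα) {Nα : ℕ} {f : ℤ → ℝ} {s : Set ℝ}
    (hs : Convex ℝ s) (hf : ∀ j : ℤ, |j| ≤ Nα → f j ∈ s) (α : ℝ) :
    interp δα Nα f α ∈ s := by
  obtain rfl | hNα := Nat.eq_zero_or_pos Nα
  · simpa [interp] using hf 0 (by simp)
  · have hx := abs_clamp_div_le hδα Nα α
    obtain ⟨hleft, hright⟩ := abs_cell_le hNα hx
    obtain ⟨hθ₀, hθ₁⟩ := sub_cell_mem_Icc (abs_le.1 hx).2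
    exact hs (hf _ hleft) (hf _ hright) (sub_nonneg.2 hθ₁) hθ₀ (sub_add_cancel _ _)

end Interpolation

section MaximumPrinciple

/-- The index set of the space grid: `(i, q)` stands for the point `(i·δα, q)`. -/
def grid (Nα : ℕ) (Qb : ℤ) : Set (ℤ × ℤ) := {x | |x.1| ≤ Nα ∧ |x.2| ≤ Qb}

lemma finite_grid (Nα : ℕ) (Qb : ℤ) : (grid Nα Qb).Finite :=
  (Set.finite_Icc (-(Nα : ℤ), -Qb) ((Nα : ℤ), Qb)).subset fun _ hx =>
    ⟨⟨(abs_le.1 hx.1).1, (abs_le.1 hx.2).1⟩, ⟨(abs_le.1 hx.1).2, (abs_le.1 hx.2).2⟩⟩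

variable {δα k ρ lamA lamB γa γb : ℝ} {Nα : ℕ} {Qb : ℤ} {la lb : Bool}
  {v : ℤ → ℤ → ℝ} {i q : ℤ}

-- The drift is differenced upwind, so for nonnegative `δα`, `k`, `lamA`, `lamB` every coefficient
-- here is nonnegative; the whole maximum principle rests on this form.
lemma Lδ_eq_sum_increments :
    Lδ δα k ρ lamA lamB γa γb Nα la lb v i q =
      (k * max (-(i * δα)) 0 / δα + if |i| < (Nα : ℤ) then ρ ^ 2 / 2 / δα ^ 2 else 0) *
          (interp δα Nα (v · q) (i * δα + δα) - v i q)
        + (k * max (i * δα) 0 / δα + if |i| < (Nα : ℤ) then ρ ^ 2 / 2 / δα ^ 2 else 0) *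
          (interp δα Nα (v · q) (i * δα - δα) - v i q)
        + lamA * (interp δα Nα (v · (if la then q - 1 else q)) (i * δα + γa) - v i q)
        + lamB * (interp δα Nα (v · (if lb then q + 1 else q)) (i * δα - γb) - v i q) := by
  cases la <;> cases lb <;> simp only [Lδ, Bool.false_eq_true, if_true, if_false] <;>
    split_ifs <;> ring

lemma abs_inventory_after_ask_le (hq : |q| ≤ Qb) (ha : la = true → -Qb < q) :
    |if la then q - 1 else q| ≤ Qb := by
  rw [abs_le] at *
  split_ifs with hla
  · have := ha hla
    omega
  · exact hq

lemma abs_inventory_after_bid_le (hq : |q| ≤ Qb) (hb : lb = true → q < Qb) :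
    |if lb then q + 1 else q| ≤ Qb := by
  rw [abs_le] at *
  split_ifs with hlb
  · have := hb hlb
    omega
  · exact hq

lemma Lδ_nonpos_of_isMaxOn (hδα : 0 < δα) (hk : 0 ≤ k) (hlamA : 0 ≤ lamA) (hlamB : 0 ≤ lamB)
    (hq : |q| ≤ Qb) (ha : la = true → -Qb < q) (hb : lb = true → q < Qb)
    (hmax : IsMaxOn (Function.uncurry v) (grid Nα Qb) (i, q)) :
    Lδ δα k ρ lamA lamB γa γb Nα la lb v i q ≤ 0 := by
  have increment_nonpos (p : ℤ) (hp : |p| ≤ Qb) (α : ℝ) :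
      interp δα Nα (v · p) α - v i q ≤ 0 :=
    sub_nonpos.2 <| interp_mem_of_convex hδα (convex_Iic _)
      (fun j hj => isMaxOn_iff.1 hmax (j, p) ⟨hj, hp⟩) α
  rw [Lδ_eq_sum_increments]
  refine add_nonpos (add_nonpos (add_nonpos ?_ ?_) ?_) ?_
  · exact mul_nonpos_of_nonneg_of_nonpos (by positivity) (increment_nonpos _ hq _)
  · exact mul_nonpos_of_nonneg_of_nonpos (by positivity) (increment_nonpos _ hq _)
  · exact mul_nonpos_of_nonneg_of_nonpos hlamA
      (increment_nonpos _ (abs_inventory_after_ask_le hq ha) _)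
  · exact mul_nonpos_of_nonneg_of_nonpos hlamB
      (increment_nonpos _ (abs_inventory_after_bid_le hq hb) _)

lemma Lδ_nonneg_of_isMinOn (hδα : 0 < δα) (hk : 0 ≤ k) (hlamA : 0 ≤ lamA) (hlamB : 0 ≤ lamB)
    (hq : |q| ≤ Qb) (ha : la = true → -Qb < q) (hb : lb = true → q < Qb)
    (hmin : IsMinOn (Function.uncurry v) (grid Nα Qb) (i, q)) :
    0 ≤ Lδ δα k ρ lamA lamB γa γb Nα la lb v i q := by
  have increment_nonneg (p : ℤ) (hp : |p| ≤ Qb) (α : ℝ) :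
      0 ≤ interp δα Nα (v · p) α - v i q :=
    sub_nonneg.2 <| interp_mem_of_convex hδα (convex_Ici _)
      (fun j hj => isMinOn_iff.1 hmin (j, p) ⟨hj, hp⟩) α
  rw [Lδ_eq_sum_increments]
  refine add_nonneg (add_nonneg (add_nonneg ?_ ?_) ?_) ?_
  · exact mul_nonneg (by positivity) (increment_nonneg _ hq _)
  · exact mul_nonneg (by positivity) (increment_nonneg _ hq _)
  · exact mul_nonneg hlamA (increment_nonneg _ (abs_inventory_after_ask_le hq ha) _)
  · exact mul_nonneg hlamB (increment_nonneg _ (abs_inventory_after_bid_le hq hb) _)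

end MaximumPrinciple

section RewardBounds

variable {σ φ ψ Υ Δ lamA lamB α A : ℝ} {q Qb : ℤ}

lemma abs_intCast_le (hq : |q| ≤ Qb) : |(q : ℝ)| ≤ Qb := by exact_mod_cast hq

lemma sq_intCast_le_sq (hq : |q| ≤ Qb) : (q : ℝ) ^ 2 ≤ (Qb : ℝ) ^ 2 :=
  sq_le_sq' (abs_le.1 (abs_intCast_le hq)).1 (abs_le.1 (abs_intCast_le hq)).2

lemma abs_drift_reward_le (hσ : 0 ≤ σ) (hα : |α| ≤ A) (hq : |q| ≤ Qb) :
    |α * σ * q| ≤ σ * A * Qb := by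
  have hA : 0 ≤ A := (abs_nonneg α).trans hα
  calc |α * σ * q| = σ * |α| * |(q : ℝ)| := by
        rw [abs_mul, abs_mul, abs_of_nonneg hσ, mul_comm |α|]
    _ ≤ σ * A * Qb := by gcongr; exact abs_intCast_le hq

lemma ftil_le (hσ : 0 ≤ σ) (hφ : 0 ≤ φ) (hΔ : 0 ≤ Δ) (hlamA : 0 ≤ lamA) (hlamB : 0 ≤ lamB)
    (hα : |α| ≤ A) (hq : |q| ≤ Qb) (la lb : Bool) :
    ftil σ φ Δ lamA lamB la lb α q ≤ Δ * (lamA + lamB) + σ * A * Qb := by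
  have hdrift := (abs_le.1 (abs_drift_reward_le hσ hα hq)).2
  have hpenalty : 0 ≤ φ * (q : ℝ) ^ 2 := by positivity
  have hask : (if la then lamA * Δ else 0) ≤ lamA * Δ := by
    split_ifs; exacts [le_rfl, by positivity]
  have hbid : (if lb then lamB * Δ else 0) ≤ lamB * Δ := by
    split_ifs; exacts [le_rfl, by positivity]
  unfold ftil
  linarith

lemma neg_le_ftil_false_false (hσ : 0 ≤ σ) (hφ : 0 ≤ φ) (hα : |α| ≤ A) (hq : |q| ≤ Qb) :
    -(σ * A * Qb + φ * (Qb : ℝ) ^ 2) ≤ ftil σ φ Δ lamA lamB false false α q := by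
  have hdrift := (abs_le.1 (abs_drift_reward_le hσ hα hq)).1
  have hpenalty := mul_le_mul_of_nonneg_left (sq_intCast_le_sq hq) hφ
  simp only [ftil, Bool.false_eq_true, if_false]
  linarith

lemma terminal_reward_nonpos (hΥ : 0 ≤ Υ) (hψ : 0 ≤ ψ) :
    -Υ * |(q : ℝ)| - ψ * (q : ℝ) ^ 2 ≤ 0 := by
  have hcost : 0 ≤ Υ * |(q : ℝ)| := by positivity
  have hpenalty : 0 ≤ ψ * (q : ℝ) ^ 2 := by positivity
  linarith

lemma le_terminal_reward (hΥ : 0 ≤ Υ) (hψ : 0 ≤ ψ) (hq : |q| ≤ Qb) :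
    -Υ * Qb - ψ * (Qb : ℝ) ^ 2 ≤ -Υ * |(q : ℝ)| - ψ * (q : ℝ) ^ 2 := by
  have hcost := mul_le_mul_of_nonneg_left (abs_intCast_le hq) hΥ
  have hpenalty := mul_le_mul_of_nonneg_left (sq_intCast_le_sq hq) hψ
  linarith

end RewardBounds

namespace SchemeSol

variable {δt δα σ Δ Υ lamA lamB k ρ γa γb φ ψ : ℝ} {N Nα : ℕ} {Qb : ℤ} {v : ℕ → ℤ → ℤ → ℝ}

lemma exists_quoting_eq_of_isMaxOn
    (hv : SchemeSol δt δα σ Δ Υ lamA lamB k ρ γa γb φ ψ N Nα Qb v) (hΥ : 0 < Υ)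
    {n : ℕ} (hn : n < N) {i q : ℤ} (hx : (i, q) ∈ grid Nα Qb)
    (hmax : IsMaxOn (Function.uncurry (v n)) (grid Nα Qb) (i, q)) :
    ∃ la lb : Bool, (la = true → -Qb < q) ∧ (lb = true → q < Qb) ∧
      (v (n + 1) i q - v n i q) / δt
        + Lδ δα k ρ lamA lamB γa γb Nα la lb (v n) i q
        + ftil σ φ Δ lamA lamB la lb (i * δα) q = 0 := by
  refine (hv.2 n hn i q hx.1 hx.2).2.2.resolve_right ?_
  rintro ⟨z, hz, hup, hdown, hgain⟩
  have hqz : |q + z| ≤ Qb := by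
    have hq := abs_le.1 hx.2
    rw [abs_le]
    rcases hz with rfl | rfl <;> simp only [forall_const] at hup hdown <;> omega
  have hle : v n i (q + z) ≤ v n i q := isMaxOn_iff.1 hmax (i, q + z) ⟨hx.1, hqz⟩
  linarith

theorem le_of_time_supersolution
    (hv : SchemeSol δt δα σ Δ Υ lamA lamB k ρ γa γb φ ψ N Nα Qb v)
    (hδt : 0 < δt) (hδα : 0 < δα) (hΥ : 0 < Υ) (hk : 0 ≤ k) (hlamA : 0 ≤ lamA)
    (hlamB : 0 ≤ lamB) {C : ℝ} {U : ℕ → ℝ}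
    (hreward : ∀ la lb : Bool, ∀ i q : ℤ, |i| ≤ Nα → |q| ≤ Qb →
      ftil σ φ Δ lamA lamB la lb (i * δα) q ≤ C)
    (hterminal : ∀ i q : ℤ, |i| ≤ Nα → |q| ≤ Qb → v N i q ≤ U N)
    (hstep : ∀ n < N, U (n + 1) + δt * C ≤ U n) {n : ℕ} (hn : n ≤ N) :
    ∀ i q : ℤ, |i| ≤ Nα → |q| ≤ Qb → v n i q ≤ U n := by
  induction hn using Nat.decreasingInduction with
  | self => exact hterminal
  | of_succ n hn ih =>
    intro i q hi hq
    obtain ⟨⟨i₀, q₀⟩, hx₀, hmax⟩ := Set.exists_max_image _ (Function.uncurry (v n))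
      (finite_grid Nα Qb) ⟨(i, q), hi, hq⟩
    obtain ⟨la, lb, ha, hb, heq⟩ :=
      hv.exists_quoting_eq_of_isMaxOn hΥ hn hx₀ (isMaxOn_iff.2 hmax)
    have hL := Lδ_nonpos_of_isMaxOn (ρ := ρ) (γa := γa) (γb := γb) hδα hk hlamA hlamB hx₀.2
      ha hb (isMaxOn_iff.2 hmax)
    have hslope : -C ≤ (v (n + 1) i₀ q₀ - v n i₀ q₀) / δt := by
      linarith [hreward la lb i₀ q₀ hx₀.1 hx₀.2]
    rw [le_div_iff₀ hδt] at hslope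
    calc v n i q ≤ v n i₀ q₀ := hmax (i, q) ⟨hi, hq⟩
      _ ≤ v (n + 1) i₀ q₀ + δt * C := by linarith
      _ ≤ U (n + 1) + δt * C := by gcongr; exact ih i₀ q₀ hx₀.1 hx₀.2
      _ ≤ U n := hstep n hn

theorem time_subsolution_le
    (hv : SchemeSol δt δα σ Δ Υ lamA lamB k ρ γa γb φ ψ N Nα Qb v)
    (hδt : 0 < δt) (hδα : 0 < δα) (hk : 0 ≤ k) (hlamA : 0 ≤ lamA) (hlamB : 0 ≤ lamB)
    {C : ℝ} {U : ℕ → ℝ}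
    (hreward : ∀ i q : ℤ, |i| ≤ Nα → |q| ≤ Qb →
      -C ≤ ftil σ φ Δ lamA lamB false false (i * δα) q)
    (hterminal : ∀ i q : ℤ, |i| ≤ Nα → |q| ≤ Qb → U N ≤ v N i q)
    (hstep : ∀ n < N, U n ≤ U (n + 1) - δt * C) {n : ℕ} (hn : n ≤ N) :
    ∀ i q : ℤ, |i| ≤ Nα → |q| ≤ Qb → U n ≤ v n i q := by
  induction hn using Nat.decreasingInduction with
  | self => exact hterminal
  | of_succ n hn ih =>
    intro i q hi hq
    obtain ⟨⟨i₀, q₀⟩, hx₀, hmin⟩ := Set.exists_min_image _ (Function.uncurry (v n))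
      (finite_grid Nα Qb) ⟨(i, q), hi, hq⟩
    have hle := (hv.2 n hn i₀ q₀ hx₀.1 hx₀.2).1 false false (by simp) (by simp)
    have hL := Lδ_nonneg_of_isMinOn (ρ := ρ) (γa := γa) (γb := γb) (la := false) (lb := false)
      hδα hk hlamA hlamB hx₀.2 (by simp) (by simp) (isMinOn_iff.2 hmin)
    have hslope : (v (n + 1) i₀ q₀ - v n i₀ q₀) / δt ≤ C := by
      linarith [hreward i₀ q₀ hx₀.1 hx₀.2]
    rw [div_le_iff₀ hδt] at hslope
    calc U n ≤ U (n + 1) - δt * C := hstep n hn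
      _ ≤ v (n + 1) i₀ q₀ - δt * C := by gcongr; exact ih i₀ q₀ hx₀.1 hx₀.2
      _ ≤ v n i₀ q₀ := by linarith
      _ ≤ v n i q := hmin (i, q) ⟨hi, hq⟩

end SchemeSol

theorem scheme_stability_general
    {T A δt δα σ Δ Υ lamA lamB k ρ γa γb φ ψ : ℝ} {N Nα : ℕ} {Qb : ℤ}
    (hσ : 0 ≤ σ) (hΔ : 0 ≤ Δ) (hΥ : 0 < Υ) (hlamA : 0 ≤ lamA) (hlamB : 0 ≤ lamB) (hk : 0 ≤ k)
    (hφ : 0 ≤ φ) (hψ : 0 ≤ ψ) (hδt : 0 < δt) (hT : N * δt = T) (hδα : 0 < δα)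
    (hA : Nα * δα = A) {v : ℕ → ℤ → ℤ → ℝ}
    (hv : SchemeSol δt δα σ Δ Υ lamA lamB k ρ γa γb φ ψ N Nα Qb v)
    {n : ℕ} (hn : n ≤ N) {i q : ℤ} (hi : |i| ≤ Nα) (hq : |q| ≤ Qb) :
    -Υ * Qb - ψ * (Qb : ℝ) ^ 2 - (T - n * δt) * (σ * A * Qb + φ * (Qb : ℝ) ^ 2) ≤ v n i q ∧
      v n i q ≤ (T - n * δt) * (Δ * (lamA + lamB) + σ * A * Qb) := by
  have abs_node_le {j : ℤ} (hj : |j| ≤ Nα) : |j * δα| ≤ A := by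
    rw [abs_mul, abs_of_pos hδα, ← hA]
    gcongr
    exact_mod_cast hj
  constructor
  · refine hv.time_subsolution_le hδt hδα hk hlamA hlamB
      (U := fun m => -Υ * Qb - ψ * (Qb : ℝ) ^ 2 - (T - m * δt) * (σ * A * Qb + φ * (Qb : ℝ) ^ 2))
      (fun _ _ hj hp => neg_le_ftil_false_false hσ hφ (abs_node_le hj) hp)
      (fun j p hj hp => ?_) (fun m _ => le_of_eq (by push_cast; ring)) hn i q hi hq
    rw [hv.1 j p hj hp, hT, sub_self, zero_mul, sub_zero]
    exact le_terminal_reward hΥ.le hψ hp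
  · refine hv.le_of_time_supersolution hδt hδα hΥ hk hlamA hlamB
      (U := fun m => (T - m * δt) * (Δ * (lamA + lamB) + σ * A * Qb))
      (fun la lb _ _ hj hp => ftil_le hσ hφ hΔ hlamA hlamB (abs_node_le hj) hp la lb)
      (fun j p hj hp => ?_) (fun m _ => le_of_eq (by push_cast; ring)) hn i q hi hq
    rw [hv.1 j p hj hp, hT, sub_self, zero_mul]
    exact terminal_reward_nonpos hΥ.le hψ

/-- Stability of the implicit scheme: every grid function `v` satisfying the implicit scheme
obeys the uniform bounds `U₁(t_n) ≤ v(t_n, αᵢ, q) ≤ U₂(t_n)` at every grid point, where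
`U₁(t) = −Υ·Q̄ − ψ·Q̄² − (T − t)(σ·A·Q̄ + φ·Q̄²)` and
`U₂(t) = (T − t)(Δ·(λᵃ + λᵇ) + σ·A·Q̄)`. -/
theorem scheme_stability
    (T A δt δα σ Δ ε Υ lamA lamB k ρ γa γb φ ψ : ℝ) (N Nα : ℕ) (Qb : ℤ)
    (hT : 0 < T) (hA : 0 < A) (hQ : 1 ≤ Qb) (hσ : 0 < σ) (hΔ : 0 ≤ Δ) (hε : 0 < ε)
    (hΥ : Υ = Δ + ε) (hlamA : 0 < lamA) (hlamB : 0 < lamB) (hk : 0 < k) (hρ : 0 < ρ)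
    (hγa : 0 < γa) (hγb : 0 < γb) (hφ : 0 < φ) (hψ : 0 < ψ)
    (hN : 0 < N) (hδt : δt = T / N) (hδα : 0 < δα) (hNα : (Nα : ℝ) * δα = A)
    (v : ℕ → ℤ → ℤ → ℝ)
    (hv : SchemeSol δt δα σ Δ Υ lamA lamB k ρ γa γb φ ψ N Nα Qb v) :
    ∀ n : ℕ, n ≤ N → ∀ i q : ℤ, |i| ≤ (Nα : ℤ) → |q| ≤ Qb →
      (-Υ * (Qb : ℝ) - ψ * (Qb : ℝ) ^ 2
          - (T - (n : ℝ) * δt) * (σ * A * (Qb : ℝ) + φ * (Qb : ℝ) ^ 2) ≤ v n i q) ∧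
      v n i q ≤ (T - (n : ℝ) * δt) * (Δ * (lamA + lamB) + σ * A * (Qb : ℝ)) :=
  fun _ hn _ _ hi hq => scheme_stability_general hσ.le hΔ (by linarith) hlamA.le hlamB.le hk.le
    hφ.le hψ.le (by rw [hδt]; positivity) (by rw [hδt]; field_simp) hδα hNα hv hn hi hq
end
end

section
/- Existence and uniqueness for the implicit scheme: for every choice of grid parameters δt = T/N > 0 and δα = A/N_α > 0, there exists exactly one grid function v satisfying the implicit scheme (i.e., satisfying the terminal condition v(t_N, αᵢ, q) = g̃(T, αᵢ, q) and the discrete equation at every n < N and every grid point (αᵢ, q)). -/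
open Finset

noncomputable section

/-! The off-grid rule is a convex combination of grid values, so on the grid every `L_δ^{lᵃ,lᵇ}`
is the generator of a jump process: `u ↦ ∑ y, a y * (u y - u x)` with `a ≥ 0`. One implicit time
step is therefore a Bellman equation `max_c (r_c + ∑ y, a_c y * (u y - u x) - β_c * u x) = 0`,
where limit controls are discounted (`β = 1/δt`) and impulses are not (`β = 0`) but have a negative
reward `-Υ`.

Existence is Perron's method: dividing each residual by a large enough constant turns the equation
into a fixed-point problem for a monotone map, squeezed between two constants. For uniqueness, let
`x` maximise `u - v` and, among the maximisers, `u`. If `u x > v x`, an option active for `u` at `x`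
can only jump to other maximisers and cannot be discounted; since `u` does not grow along such
jumps, it would have to be paid for by a nonnegative reward. -/

section FixedPoint

variable {α : Type*}

theorem exists_fixedPoint_of_le_map_of_map_le [ConditionallyCompleteLattice α] {T : α → α}
    (hT : Monotone T) {lo hi : α} (hle : lo ≤ hi) (hlo : lo ≤ T lo) (hhi : T hi ≤ hi) :
    ∃ u, T u = u := by
  have : Fact (lo ≤ hi) := ⟨hle⟩
  let f : Set.Icc lo hi →o Set.Icc lo hi :=
    { toFun u := ⟨T u, hlo.trans (hT u.2.1), (hT u.2.2).trans hhi⟩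
      monotone' _ _ huw := hT huw }
  exact ⟨f.lfp, congrArg Subtype.val f.map_lfp⟩

theorem backward_recursion_iff (Φ : α → α) (g : α) (N : ℕ) (V : ℕ → α) :
    (V N = g ∧ ∀ n < N, V n = Φ (V (n + 1))) ↔ ∀ n ≤ N, V n = Φ^[N - n] g := by
  have iterate_sub {n : ℕ} (hn : n < N) : Φ^[N - n] g = Φ (Φ^[N - (n + 1)] g) := by
    rw [← Function.iterate_succ_apply' Φ]
    congr
    omega
  constructor
  · rintro ⟨hN, hstep⟩ n hn
    induction hn using Nat.decreasingInduction with
    | self => simpa using hN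
    | of_succ n hn ih => rw [hstep n hn, ih, iterate_sub hn]
  · refine fun h => ⟨by simpa using h N le_rfl, fun n hn => ?_⟩
    rw [h n hn.le, h (n + 1) hn, iterate_sub hn]

end FixedPoint

section Bellman

variable {X : Type*}

/-- One of the alternatives offered to the controller of a jump process: collect a running reward,
discount, and jump to `y` at rate `rate y`. A zero discount together with a single unit rate encodes
an impulse, whose cost is minus the reward. -/
structure JumpOption (X : Type*) where
  reward : ℝ
  discount : ℝ
  rate : X → ℝ
  discount_nonneg : 0 ≤ discount
  rate_nonneg : 0 ≤ rate

namespace JumpOption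

/-- The option of running a jump process with the given rates during an implicit Euler step of
length `τ`, ending at the continuation value `w`. -/
def implicitStep {τ : ℝ} (hτ : 0 < τ) (w f : ℝ) (a : X → ℝ) (ha : 0 ≤ a) :
    JumpOption X where
  reward := w / τ + f
  discount := 1 / τ
  rate := a
  discount_nonneg := by positivity
  rate_nonneg := ha

/-- The option of moving at once to `y` against a fixed cost. -/
def impulse [DecidableEq X] (y : X) (cost : ℝ) : JumpOption X where
  reward := -cost
  discount := 0
  rate := Pi.single y 1
  discount_nonneg := le_rfl
  rate_nonneg := Pi.single_nonneg.2 zero_le_one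

variable [Fintype X] (c : JumpOption X) (x : X) (u : X → ℝ)

/-- The expression whose maximum over the available options vanishes in the Bellman equation. -/
def residual : ℝ :=
  c.reward + ∑ y, c.rate y * (u y - u x) - c.discount * u x

theorem residual_implicitStep {τ : ℝ} (hτ : 0 < τ) (w f : ℝ) (a : X → ℝ) (ha : 0 ≤ a) :
    (implicitStep hτ w f a ha).residual x u =
      (w - u x) / τ + ∑ y, a y * (u y - u x) + f := by
  simp only [residual, implicitStep]
  ring

theorem residual_impulse [DecidableEq X] (y : X) (cost : ℝ) :
    (impulse y cost).residual x u = u y - u x - cost := by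
  simp only [residual, impulse, Pi.single_apply, ite_mul, one_mul, zero_mul, sum_ite_eq',
    mem_univ, if_true]
  ring

theorem residual_const (C : ℝ) : c.residual x (fun _ => C) = c.reward - c.discount * C := by
  simp [residual]

theorem discount_eq_zero_and_rate_eq_zero {x : X} {u v : X → ℝ}
    (hmax : ∀ y, u y - v y ≤ u x - v x) (hlt : v x < u x) (hu : 0 ≤ c.residual x u)
    (hv : c.residual x v ≤ 0) :
    c.discount = 0 ∧ ∀ y, u y - v y < u x - v x → c.rate y = 0 := by
  have hterm (y : X) : c.rate y * ((u y - v y) - (u x - v x)) ≤ 0 :=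
    mul_nonpos_of_nonneg_of_nonpos (c.rate_nonneg y) (sub_nonpos.2 (hmax y))
  have hsum_nonpos := sum_nonpos fun y (_ : y ∈ univ) => hterm y
  have hdiscount_nonneg : 0 ≤ c.discount * (u x - v x) :=
    mul_nonneg c.discount_nonneg (sub_pos.2 hlt).le
  have hbalance : c.discount * (u x - v x) ≤
      ∑ y, c.rate y * ((u y - v y) - (u x - v x)) := by
    have hsplit : ∑ y, c.rate y * ((u y - v y) - (u x - v x)) =
        ∑ y, c.rate y * (u y - u x) - ∑ y, c.rate y * (v y - v x) := by
      rw [← sum_sub_distrib]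
      exact sum_congr rfl fun y _ => by ring
    unfold residual at hu hv
    linarith
  have hzero (y : X) : c.rate y * ((u y - v y) - (u x - v x)) = 0 :=
    (sum_eq_zero_iff_of_nonpos fun y _ => hterm y).1
      (hsum_nonpos.antisymm (hdiscount_nonneg.trans hbalance)) y (mem_univ y)
  refine ⟨?_, fun y hy => (mul_eq_zero.1 (hzero y)).resolve_right (sub_neg.2 hy).ne⟩
  exact (mul_eq_zero.1 ((hbalance.trans hsum_nonpos).antisymm hdiscount_nonneg)).resolve_right
    (sub_pos.2 hlt).ne'

/-- The damping factor that makes `u ↦ u x + residual / damping` monotone. -/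
def damping : ℝ :=
  1 + c.discount + ∑ y, c.rate y

theorem damping_pos : 0 < c.damping := by
  have := c.discount_nonneg
  have : 0 ≤ ∑ y, c.rate y := sum_nonneg fun y _ => c.rate_nonneg y
  unfold damping
  positivity

/-- The update of the value at `x` prescribed by an option; its fixed points are the zeros of the
residual. -/
def relax : ℝ :=
  u x + c.residual x u / c.damping

theorem relax_eq_div : c.relax x u = (c.reward + u x + ∑ y, c.rate y * u y) / c.damping := by
  have h : c.residual x u + c.damping * u x = c.reward + u x + ∑ y, c.rate y * u y := by
    simp only [residual, damping, mul_sub, sum_sub_distrib, ← sum_mul]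
    ring
  rw [relax, ← h, add_div, mul_div_cancel_left₀ _ c.damping_pos.ne', add_comm]

theorem monotone_relax : Monotone (c.relax x) := by
  intro u w huw
  rw [relax_eq_div, relax_eq_div]
  have hsum : ∑ y, c.rate y * u y ≤ ∑ y, c.rate y * w y :=
    sum_le_sum fun y _ => mul_le_mul_of_nonneg_left (huw y) (c.rate_nonneg y)
  have hx : u x ≤ w x := huw x
  have := c.damping_pos
  gcongr

theorem relax_le_iff : c.relax x u ≤ u x ↔ c.residual x u ≤ 0 := by
  simp [relax, div_le_iff₀ c.damping_pos]

theorem le_relax_iff : u x ≤ c.relax x u ↔ 0 ≤ c.residual x u := by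
  simp [relax, le_div_iff₀ c.damping_pos]

end JumpOption

variable [Fintype X] {ι : X → Type*} {C : ∀ x, ι x → JumpOption X} {u v : X → ℝ}

/-- `max_c residual ≥ 0` at every state. -/
def IsSubsolution (C : ∀ x, ι x → JumpOption X) (u : X → ℝ) : Prop :=
  ∀ x, ∃ c, 0 ≤ (C x c).residual x u

/-- `max_c residual ≤ 0` at every state. -/
def IsSupersolution (C : ∀ x, ι x → JumpOption X) (u : X → ℝ) : Prop :=
  ∀ x c, (C x c).residual x u ≤ 0

/-- The Bellman equation `max_c residual = 0`, where `C x` lists the options available at `x`. -/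
def IsBellmanSolution (C : ∀ x, ι x → JumpOption X) (u : X → ℝ) : Prop :=
  ∀ x, (∀ c, (C x c).residual x u ≤ 0) ∧ ∃ c, (C x c).residual x u = 0

theorem isBellmanSolution_iff :
    IsBellmanSolution C u ↔ IsSubsolution C u ∧ IsSupersolution C u := by
  constructor
  · exact fun h => ⟨fun x => (h x).2.imp fun c hc => hc.ge, fun x => (h x).1⟩
  · exact fun ⟨hsub, hsup⟩ x => ⟨hsup x, (hsub x).imp fun c hc => (hsup x c).antisymm hc⟩

theorem IsSubsolution.le_of_isSupersolution (hC : ∀ x c, 0 < (C x c).discount ∨ (C x c).reward < 0)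
    (hu : IsSubsolution C u) (hv : IsSupersolution C v) : u ≤ v := by
  by_contra hnle
  obtain ⟨x₀, hx₀⟩ : ∃ x₀, v x₀ < u x₀ := by simpa [Pi.le_def] using hnle
  have : Nonempty X := ⟨x₀⟩
  obtain ⟨x, hx⟩ := Finite.exists_max fun y => toLex (u y - v y, u y)
  simp only [Prod.Lex.toLex_le_toLex] at hx
  have hdiff (y : X) : u y - v y ≤ u x - v x := (hx y).elim le_of_lt fun h => h.1.le
  have hpos : 0 < u x - v x := (sub_pos.2 hx₀).trans_le (hdiff x₀)
  obtain ⟨c, hc⟩ := hu x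
  obtain ⟨hdiscount, hrate⟩ :=
    (C x c).discount_eq_zero_and_rate_eq_zero hdiff (sub_pos.1 hpos) hc (hv x c)
  have hreward : (C x c).reward < 0 := (hC x c).resolve_left hdiscount.not_gt
  have hjump (y : X) : (C x c).rate y * (u y - u x) ≤ 0 := by
    rcases hx y with hlt | ⟨-, hle⟩
    · simp [hrate y hlt]
    · exact mul_nonpos_of_nonneg_of_nonpos ((C x c).rate_nonneg y) (sub_nonpos.2 hle)
  have hsum := sum_nonpos fun y (_ : y ∈ univ) => hjump y
  rw [JumpOption.residual, hdiscount] at hc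
  linarith

theorem IsSubsolution.exists_isBellmanSolution [∀ x, Finite (ι x)] (hu : IsSubsolution C u)
    (hv : IsSupersolution C v) (huv : u ≤ v) : ∃ w, IsBellmanSolution C w := by
  have (x : X) : Nonempty (ι x) := (hu x).nonempty
  let T : (X → ℝ) → X → ℝ := fun w x => ⨆ c, (C x c).relax x w
  have hbdd (w : X → ℝ) (x : X) : BddAbove (Set.range fun c => (C x c).relax x w) :=
    (Set.finite_range _).bddAbove
  have hT : Monotone T := fun w w' hw x =>
    ciSup_mono (hbdd w' x) fun c => (C x c).monotone_relax x hw
  have hlo : u ≤ T u := fun x =>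
    let ⟨c, hc⟩ := hu x
    le_ciSup_of_le (hbdd u x) c (((C x c).le_relax_iff x u).2 hc)
  have hhi : T v ≤ v := fun x => ciSup_le fun c => ((C x c).relax_le_iff x v).2 (hv x c)
  obtain ⟨w, hw⟩ := exists_fixedPoint_of_le_map_of_map_le hT huv hlo hhi
  refine ⟨w, isBellmanSolution_iff.2 ⟨fun x => ?_, fun x c => ?_⟩⟩
  · obtain ⟨c, hc⟩ := exists_eq_ciSup_of_finite (f := fun c => (C x c).relax x w)
    exact ⟨c, ((C x c).le_relax_iff x w).1 (hc.trans (congrFun hw x)).ge⟩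
  · exact ((C x c).relax_le_iff x w).1 ((le_ciSup (hbdd w x) c).trans_eq (congrFun hw x))

theorem exists_const_isSubsolution_isSupersolution [∀ x, Finite (ι x)]
    (hC : ∀ x c, 0 < (C x c).discount ∨ (C x c).reward < 0)
    (hdiscount : ∀ x, ∃ c, 0 < (C x c).discount) :
    ∃ B : ℝ, 0 ≤ B ∧ IsSubsolution C (fun _ => -B) ∧ IsSupersolution C (fun _ => B) := by
  obtain ⟨B, hB⟩ := (Set.finite_range fun p : Σ x, ι x =>
    |(C p.1 p.2).reward| / (C p.1 p.2).discount).bddAbove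
  have hreward (x : X) (c : ι x) (hc : 0 < (C x c).discount) :
      |(C x c).reward| ≤ (C x c).discount * max B 0 := by
    rw [← div_le_iff₀' hc]
    exact (hB ⟨⟨x, c⟩, rfl⟩).trans (le_max_left _ _)
  refine ⟨max B 0, le_max_right _ _, fun x => ?_, fun x c => ?_⟩
  · obtain ⟨c, hc⟩ := hdiscount x
    refine ⟨c, ?_⟩
    rw [JumpOption.residual_const]
    linarith [(abs_le.1 (hreward x c hc)).1]
  · rw [JumpOption.residual_const]
    rcases hC x c with hc | hc
    · linarith [(abs_le.1 (hreward x c hc)).2]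
    · linarith [mul_nonneg (C x c).discount_nonneg (le_max_right B 0)]

theorem existsUnique_isBellmanSolution [∀ x, Finite (ι x)]
    (hC : ∀ x c, 0 < (C x c).discount ∨ (C x c).reward < 0)
    (hdiscount : ∀ x, ∃ c, 0 < (C x c).discount) : ∃! u, IsBellmanSolution C u := by
  obtain ⟨B, hB, hsub, hsup⟩ := exists_const_isSubsolution_isSupersolution hC hdiscount
  obtain ⟨u, hu⟩ := hsub.exists_isBellmanSolution hsup fun _ => neg_le_self hB
  refine ⟨u, hu, fun v hv => ?_⟩
  rw [isBellmanSolution_iff] at hu hv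
  exact (hv.1.le_of_isSupersolution hC hu.2).antisymm (hu.1.le_of_isSupersolution hC hv.2)

end Bellman

section Grid

variable {M : ℕ} {Q : ℤ}

/-- The indices `(i, q)` of the grid points `(αᵢ, q)`. -/
abbrev Grid (M : ℕ) (Q : ℤ) : Type :=
  {p : ℤ × ℤ // |p.1| ≤ (M : ℤ) ∧ |p.2| ≤ Q}

instance : Fintype (Grid M Q) :=
  Fintype.subtype (Icc (-(M : ℤ)) M ×ˢ Icc (-Q) Q) fun p => by simp [abs_le]

/-- The values at the grid points of a time slice of a grid function. -/
def onGrid (M : ℕ) (Q : ℤ) (v : ℤ → ℤ → ℝ) : Grid M Q → ℝ :=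
  fun x => v x.1.1 x.1.2

theorem exists_onGrid_eq (u : Grid M Q → ℝ) : ∃ v, onGrid M Q v = u :=
  ⟨fun i q => Function.extend Subtype.val u 0 (i, q),
    funext fun x => Subtype.val_injective.extend_apply u 0 x⟩

/-- The functional `L` acts on time slices as the generator at `x` of a jump process that does not
leave the grid. -/
def IsGridGenerator (x : Grid M Q) (L : (ℤ → ℤ → ℝ) → ℝ) : Prop :=
  ∃ a : Grid M Q → ℝ, 0 ≤ a ∧
    ∀ v, L v = ∑ y, a y * (onGrid M Q v y - onGrid M Q v x)

namespace IsGridGenerator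

variable {x : Grid M Q} {L L' : (ℤ → ℤ → ℝ) → ℝ}

theorem eval_sub (y : Grid M Q) :
    IsGridGenerator x fun v => onGrid M Q v y - onGrid M Q v x :=
  ⟨Pi.single y 1, Pi.single_nonneg.2 zero_le_one, fun v => by simp [Pi.single_apply]⟩

theorem add (hL : IsGridGenerator x L) (hL' : IsGridGenerator x L') :
    IsGridGenerator x fun v => L v + L' v := by
  obtain ⟨a, ha, hLa⟩ := hL
  obtain ⟨b, hb, hLb⟩ := hL'
  exact ⟨a + b, add_nonneg ha hb, fun v => by simp [hLa, hLb, add_mul, sum_add_distrib]⟩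

theorem const_mul {r : ℝ} (hr : 0 ≤ r) (hL : IsGridGenerator x L) :
    IsGridGenerator x fun v => r * L v := by
  obtain ⟨a, ha, hLa⟩ := hL
  exact ⟨fun y => r * a y, fun y => mul_nonneg hr (ha y), fun v => by
    simp [hLa, mul_sum, mul_assoc]⟩

end IsGridGenerator

theorem exists_interp_eq {δα : ℝ} (hδα : 0 < δα) (hM : 0 < M) (α : ℝ) :
    ∃ (j : ℤ) (θ : ℝ), |j| ≤ (M : ℤ) ∧ |j + 1| ≤ (M : ℤ) ∧ 0 ≤ θ ∧ θ ≤ 1 ∧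
      ∀ f : ℤ → ℝ, interp δα M f α = (1 - θ) * f j + θ * f (j + 1) := by
  set s : ℝ := max (-((M : ℝ) * δα)) (min ((M : ℝ) * δα) α) / δα with hs
  set j : ℤ := min ⌊s⌋ ((M : ℤ) - 1) with hj
  have hA : 0 ≤ (M : ℝ) * δα := by positivity
  have hs_ge : -(M : ℝ) ≤ s := by
    rw [hs, le_div_iff₀ hδα, neg_mul]
    exact le_max_left _ _
  have hs_le : s ≤ M := by
    rw [hs, div_le_iff₀ hδα]
    exact max_le (neg_le_self hA) (min_le_left _ _)
  have hj_ge : -(M : ℤ) ≤ j := le_min (Int.le_floor.2 (by exact_mod_cast hs_ge)) (by omega)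
  have hj_le : j ≤ (M : ℤ) - 1 := min_le_right _ _
  have hjs : (j : ℝ) ≤ s := Int.le_floor.1 (min_le_left _ _)
  have hsj : s ≤ j + 1 := by
    rcases min_choice ⌊s⌋ ((M : ℤ) - 1) with hmin | hmin
    · rw [hj, hmin]
      exact (Int.lt_floor_add_one s).le
    · rw [hj, hmin]
      simpa using hs_le
  exact ⟨j, s - j, abs_le.2 ⟨hj_ge, by omega⟩, abs_le.2 ⟨by omega, by omega⟩,
    by linarith, by linarith, fun f => rfl⟩

theorem isGridGenerator_interp_sub {δα : ℝ} (hδα : 0 < δα) (hM : 0 < M) (x : Grid M Q) (α : ℝ)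
    {q : ℤ} (hq : |q| ≤ Q) :
    IsGridGenerator x fun v => interp δα M (fun j => v j q) α - v x.1.1 x.1.2 := by
  obtain ⟨j, θ, hj, hj', hθ₀, hθ₁, hinterp⟩ := exists_interp_eq hδα hM α
  have hconv := ((IsGridGenerator.eval_sub ⟨(j, q), hj, hq⟩).const_mul (sub_nonneg.2 hθ₁)).add
    ((IsGridGenerator.eval_sub (x := x) ⟨(j + 1, q), hj', hq⟩).const_mul hθ₀)
  convert hconv using 2 with v
  simp only [hinterp, onGrid]
  ring

/-- The upwind drift and the diffusion are jumps to the two neighbouring rows. -/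
theorem Lδ_eq (δα k ρ lamA lamB γa γb : ℝ) (la lb : Bool) (v : ℤ → ℤ → ℝ) (i q : ℤ) :
    Lδ δα k ρ lamA lamB γa γb M la lb v i q =
      (k * max (-(i * δα)) 0 / δα + if |i| < (M : ℤ) then ρ ^ 2 / 2 / δα ^ 2 else 0) *
          (interp δα M (fun j => v j q) (i * δα + δα) - v i q)
        + (k * max (i * δα) 0 / δα + if |i| < (M : ℤ) then ρ ^ 2 / 2 / δα ^ 2 else 0) *
          (interp δα M (fun j => v j q) (i * δα - δα) - v i q)
        + lamA * (interp δα M (fun j => v j (if la then q - 1 else q)) (i * δα + γa) - v i q)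
        + lamB * (interp δα M (fun j => v j (if lb then q + 1 else q)) (i * δα - γb) - v i q) := by
  unfold Lδ
  cases la <;> cases lb <;> split_ifs <;> ring

/-- The limit controls admissible at inventory `q`: `(lᵃ, lᵇ)`, with `true` for `1`. -/
abbrev LimitControl (Q q : ℤ) : Type :=
  {l : Bool × Bool // (l.1 = true → -Q < q) ∧ (l.2 = true → q < Q)}

/-- The impulses admissible at inventory `q`. -/
abbrev Impulse (Q q : ℤ) : Type :=
  {z : ℤ // (z = 1 ∨ z = -1) ∧ (z = 1 → q < Q) ∧ (z = -1 → -Q < q)}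

instance (Q q : ℤ) : Finite (Impulse Q q) :=
  Set.Finite.to_subtype <| (Set.toFinite {1, -1}).subset fun _ hz => hz.1

/-- The grid point reached from `x` by an impulse. -/
def Impulse.target {x : Grid M Q} (z : Impulse Q x.1.2) : Grid M Q :=
  ⟨(x.1.1, x.1.2 + z), x.2.1, by
    have := abs_le.1 x.2.2
    obtain ⟨hz | hz, hup, hdown⟩ := z.2
    · have := hup hz
      exact abs_le.2 ⟨by omega, by omega⟩
    · have := hdown hz
      exact abs_le.2 ⟨by omega, by omega⟩⟩

theorem isGridGenerator_Lδ {δα k lamA lamB : ℝ} (hδα : 0 < δα) (hM : 0 < M) (hk : 0 ≤ k)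
    (hlamA : 0 ≤ lamA) (hlamB : 0 ≤ lamB) (ρ γa γb : ℝ) (x : Grid M Q)
    (l : LimitControl Q x.1.2) :
    IsGridGenerator x fun v =>
      Lδ δα k ρ lamA lamB γa γb M l.1.1 l.1.2 v x.1.1 x.1.2 := by
  obtain ⟨⟨i, q⟩, hi, hq⟩ := x
  obtain ⟨⟨la, lb⟩, ha, hb⟩ := l
  have hq' := abs_le.1 hq
  have hask : |if la then q - 1 else q| ≤ Q := by
    split_ifs with hla
    · exact abs_le.2 ⟨by linarith [ha hla], by linarith⟩
    · exact hq
  have hbid : |if lb then q + 1 else q| ≤ Q := by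
    split_ifs with hlb
    · exact abs_le.2 ⟨by linarith, by linarith [hb hlb]⟩
    · exact hq
  have hinterp (α : ℝ) {q' : ℤ} (hq' : |q'| ≤ Q) :=
    isGridGenerator_interp_sub hδα hM (⟨(i, q), hi, hq⟩ : Grid M Q) α hq'
  simp only [Lδ_eq]
  exact ((((hinterp _ hq).const_mul (by positivity)).add
    ((hinterp _ hq).const_mul (by positivity))).add
    ((hinterp _ hask).const_mul hlamA)).add ((hinterp _ hbid).const_mul hlamB)

end Grid

section Scheme

variable {δt δα Υ lamA lamB k : ℝ} {Nα : ℕ}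

theorem exists_schemeSol_iff_recursion (hδt : 0 < δt) (hδα : 0 < δα) (hNα : 0 < Nα) (hΥ : 0 < Υ)
    (hk : 0 ≤ k) (hlamA : 0 ≤ lamA) (hlamB : 0 ≤ lamB) (σ Δ ρ γa γb φ ψ : ℝ) (N : ℕ) (Qb : ℤ) :
    ∃ Φ : (Grid Nα Qb → ℝ) → Grid Nα Qb → ℝ, ∀ v : ℕ → ℤ → ℤ → ℝ,
      SchemeSol δt δα σ Δ Υ lamA lamB k ρ γa γb φ ψ N Nα Qb v ↔
        onGrid Nα Qb (v N) = (fun x => -Υ * |(x.1.2 : ℝ)| - ψ * (x.1.2 : ℝ) ^ 2) ∧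
          ∀ n < N, onGrid Nα Qb (v n) = Φ (onGrid Nα Qb (v (n + 1))) := by
  choose a ha hLa using fun (x : Grid Nα Qb) (l : LimitControl Qb x.1.2) =>
    isGridGenerator_Lδ hδα hNα hk hlamA hlamB ρ γa γb x l
  let C (w : Grid Nα Qb → ℝ) (x : Grid Nα Qb) :
      LimitControl Qb x.1.2 ⊕ Impulse Qb x.1.2 → JumpOption (Grid Nα Qb) :=
    Sum.elim
      (fun l => .implicitStep hδt (w x)
        (ftil σ φ Δ lamA lamB l.1.1 l.1.2 (x.1.1 * δα) x.1.2) (a x l) (ha x l))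
      (fun z => .impulse z.target Υ)
  have hdiscount : 0 < 1 / δt := by positivity
  have hC (w) : ∃! u, IsBellmanSolution (C w) u := existsUnique_isBellmanSolution
    (fun x => Sum.rec (fun l => .inl hdiscount) fun z => .inr (neg_lt_zero.2 hΥ))
    (fun x => ⟨.inl ⟨(false, false), by simp⟩, hdiscount⟩)
  choose Φ hΦ hΦ_unique using hC
  refine ⟨Φ, fun v => ?_⟩
  have hΦ_iff (w u) : u = Φ w ↔ IsBellmanSolution (C w) u :=
    ⟨fun h => h ▸ hΦ w, hΦ_unique w u⟩
  simp only [hΦ_iff, IsBellmanSolution, C, Sum.forall, Sum.exists, Sum.elim_inl, Sum.elim_inr,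
    JumpOption.residual_implicitStep, JumpOption.residual_impulse, ← hLa, funext_iff]
  simp [SchemeSol, onGrid, Impulse.target, and_assoc]

theorem scheme_exists_unique_general (hδt : 0 < δt) (hδα : 0 < δα) (hNα : 0 < Nα) (hΥ : 0 < Υ)
    (hk : 0 ≤ k) (hlamA : 0 ≤ lamA) (hlamB : 0 ≤ lamB) (σ Δ ρ γa γb φ ψ : ℝ) (N : ℕ) (Qb : ℤ) :
    ∃ v : ℕ → ℤ → ℤ → ℝ,
      SchemeSol δt δα σ Δ Υ lamA lamB k ρ γa γb φ ψ N Nα Qb v ∧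
      ∀ v' : ℕ → ℤ → ℤ → ℝ,
        SchemeSol δt δα σ Δ Υ lamA lamB k ρ γa γb φ ψ N Nα Qb v' →
        ∀ n : ℕ, n ≤ N → ∀ i q : ℤ, |i| ≤ (Nα : ℤ) → |q| ≤ Qb →
          v' n i q = v n i q := by
  obtain ⟨Φ, hΦ⟩ := exists_schemeSol_iff_recursion hδt hδα hNα hΥ hk hlamA hlamB σ Δ ρ γa γb φ ψ
    N Qb
  have hsol (v : ℕ → ℤ → ℤ → ℝ) := (hΦ v).trans
    (backward_recursion_iff Φ _ N fun n => onGrid Nα Qb (v n))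
  choose v hv using fun n => exists_onGrid_eq
    (Φ^[N - n] fun x : Grid Nα Qb => -Υ * |(x.1.2 : ℝ)| - ψ * (x.1.2 : ℝ) ^ 2)
  refine ⟨v, (hsol v).2 fun n _ => hv n, fun v' hv' n hn i q hi hq => ?_⟩
  exact congrFun (((hsol v').1 hv' n hn).trans (hv n).symm) ⟨(i, q), hi, hq⟩

end Scheme

/-- Existence and uniqueness for the implicit scheme: for every choice of grid parameters
`δt = T/N > 0` and `δα = A/Nα > 0` there exists exactly one grid function `v` satisfying the
implicit scheme (uniqueness is, of course, uniqueness of the values at the grid points). -/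
theorem scheme_exists_unique
    (T A δt δα σ Δ ε Υ lamA lamB k ρ γa γb φ ψ : ℝ) (N Nα : ℕ) (Qb : ℤ)
    (hT : 0 < T) (hA : 0 < A) (hQ : 1 ≤ Qb) (hσ : 0 < σ) (hΔ : 0 ≤ Δ) (hε : 0 < ε)
    (hΥ : Υ = Δ + ε) (hlamA : 0 < lamA) (hlamB : 0 < lamB) (hk : 0 < k) (hρ : 0 < ρ)
    (hγa : 0 < γa) (hγb : 0 < γb) (hφ : 0 < φ) (hψ : 0 < ψ)
    (hN : 0 < N) (hδt : δt = T / N) (hδα : 0 < δα) (hNα : (Nα : ℝ) * δα = A) :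
    ∃ v : ℕ → ℤ → ℤ → ℝ,
      SchemeSol δt δα σ Δ Υ lamA lamB k ρ γa γb φ ψ N Nα Qb v ∧
      ∀ v' : ℕ → ℤ → ℤ → ℝ,
        SchemeSol δt δα σ Δ Υ lamA lamB k ρ γa γb φ ψ N Nα Qb v' →
        ∀ n : ℕ, n ≤ N → ∀ i q : ℤ, |i| ≤ (Nα : ℤ) → |q| ≤ Qb →
          v' n i q = v n i q := by
  have hNα_pos : 0 < Nα := Nat.pos_of_ne_zero fun h => by simp [h] at hNα; linarith
  exact scheme_exists_unique_general (by rw [hδt]; positivity) hδα hNα_pos (by linarith) hk.le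
    hlamA.le hlamB.le σ Δ ρ γa γb φ ψ N Qb
end
end

section
/- Consistency of the implicit scheme: let φ : [0,T] × ℝ × (ℤ ∩ [−Q̄, Q̄]) → ℝ be bounded and such that for each q the map (t, α) ↦ φ(t, α, q) is continuously differentiable in t and twice continuously differentiable in α. Fix (t, α, q) with t ∈ [0, T), α ∈ (−A, A), α + γᵃ < A, α − γᵇ > −A and |q| < Q̄. For grid parameters δ = (δt, δα), grid points (t′, α′) = (t_n, αᵢ) with t_n < T, and ξ ∈ ℝ, set S(δ, (t′, α′, q), ξ) := max( max over lᵃ, lᵇ ∈ {0,1} of ( (φ(t′+δt, α′, q) − φ(t′, α′, q))/δt + L_δ^{lᵃ,lᵇ}(φ + ξ)(t′, α′, q) + f̃^{lᵃ,lᵇ}(t′, α′, q) ), max over z ∈ {1, −1} of ( B_δ^z (φ + ξ)(t′, α′, q) − Υ ) ). Then, in the joint limit (δt, δα) → (0, 0), (t′, α′) → (t, α) along grid points, ξ → 0, S(δ, (t′, α′, q), ξ) converges to max( max over lᵃ, lᵇ ∈ {0,1} of ( ∂ₜφ(t, α, q) + L^{lᵃ,lᵇ}φ(t, α, q) + f̃^{lᵃ,lᵇ}(t,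 α, q) ), max over z ∈ {1, −1} of ( φ(t, α, q + z) − Υ − φ(t, α, q) ) ), where L^{lᵃ,lᵇ}φ(t, α, q) = −k·α·∂_αφ(t, α, q) + (ρ²/2)·∂²_{αα}φ(t, α, q) + λᵃ·(1_{lᵃ=0}·φ(t, α+γᵃ, q) + 1_{lᵃ=1}·φ(t, α+γᵃ, q−1) − φ(t, α, q)) + λᵇ·(1_{lᵇ=0}·φ(t, α−γᵇ, q) + 1_{lᵇ=1}·φ(t, α−γᵇ, q+1) − φ(t, α, q)). -/
open Finset

noncomputable section

/-- The value `S(δ, (t′, α′, q), ξ)` of the implicit scheme applied to the shifted test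
function `φ + ξ` at the grid node `(t′, α′) = (n·δt, i·δα)`: the maximum over all
`lᵃ, lᵇ ∈ {0,1}` of the limit-order branch and over all `z ∈ {1, −1}` of the impulse branch. -/
def consistS (δt δα σ Δ Υ lamA lamB k ρ γa γb φp : ℝ) (Nα : ℕ)
    (u : ℝ → ℝ → ℤ → ℝ) (n : ℕ) (i : ℤ) (q : ℤ) (ξ : ℝ) : ℝ :=
  let tp : ℝ := (n : ℝ) * δt
  let αp : ℝ := (i : ℝ) * δα
  let slice : ℤ → ℤ → ℝ := fun j q' => u tp ((j : ℝ) * δα) q' + ξ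
  let lim : Bool → Bool → ℝ := fun la lb =>
    (u (tp + δt) αp q - u tp αp q) / δt
      + Lδ δα k ρ lamA lamB γa γb Nα la lb slice i q
      + ftil σ φp Δ lamA lamB la lb αp q
  max (max (max (lim false false) (lim false true)) (max (lim true false) (lim true true)))
    (max (slice i (q + 1) - slice i q - Υ) (slice i (q - 1) - slice i q - Υ))

/-- The limiting value: the maximum over `lᵃ, lᵇ ∈ {0,1}` of
`∂ₜφ + L^{lᵃ,lᵇ}φ + f̃^{lᵃ,lᵇ}` and over `z ∈ {1, −1}` of `φ(t, α, q + z) − Υ − φ(t, α, q)`,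
where `L^{lᵃ,lᵇ}φ = −k·α·∂_αφ + (ρ²/2)·∂²_{αα}φ + λᵃ·(…) + λᵇ·(…)`. -/
def consistTarget (σ Δ Υ lamA lamB k ρ γa γb φp : ℝ)
    (u ut ua uaa : ℝ → ℝ → ℤ → ℝ) (t α : ℝ) (q : ℤ) : ℝ :=
  let lim : Bool → Bool → ℝ := fun la lb =>
    ut t α q
      + (-(k * α) * ua t α q + ρ ^ 2 / 2 * uaa t α q
        + lamA * ((if la then u t (α + γa) (q - 1) else u t (α + γa) q) - u t α q)
        + lamB * ((if lb then u t (α - γb) (q + 1) else u t (α - γb) q) - u t α q))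
      + ftil σ φp Δ lamA lamB la lb α q
  max (max (max (lim false false) (lim false true)) (max (lim true false) (lim true true)))
    (max (u t α (q + 1) - Υ - u t α q) (u t α (q - 1) - Υ - u t α q))

/-!
The operators `L_δ` and `B_δ` annihilate constants, so the shift `ξ` drops out of the scheme. Near
an interior point `α` the neighbours `αᵢ ± δα` of a node are again nodes, where interpolation is
exact; the time, upwind and second differences are therefore genuine difference quotients of `φ`,
and the mean value theorem rewrites each of them as a derivative of `φ` at a point tending to
`(t, α)`. The upwind weights recombine through `x₋ - x₊ = -x`. Each interpolated jump value is a
convex combination of values of `φ` at nodes within `δα` of the jump target, and the maximum of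
finitely many convergent branches converges.
-/

open Filter Topology

section Calculus

-- Cauchy's mean value theorem for `s ↦ f (x + s) + f (x - s)` against `s ↦ s ^ 2` reduces the
-- second difference to a slope of `f'`.
lemma exists_hasDerivAt_eq_second_difference {f f' f'' : ℝ → ℝ} {x d : ℝ} (hd : 0 < d)
    (hf : ∀ s ∈ Set.Icc (x - d) (x + d), HasDerivAt f (f' s) s)
    (hf' : ∀ s ∈ Set.Icc (x - d) (x + d), HasDerivAt f' (f'' s) s) :
    ∃ c ∈ Set.Ioo (x - d) (x + d), f'' c = (f (x + d) - 2 * f x + f (x - d)) / d ^ 2 := by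
  have hsum : ∀ s ∈ Set.Icc 0 d,
      HasDerivAt (fun r => f (x + r) + f (x - r)) (f' (x + s) - f' (x - s)) s := fun s hs =>
    (((hf (x + s) ⟨by linarith [hs.1], by linarith [hs.2]⟩).comp_const_add x s).add
      ((hf (x - s) ⟨by linarith [hs.2], by linarith [hs.1]⟩).comp_const_sub x s)).congr_deriv
      (sub_eq_add_neg _ _).symm
  have hsq (s : ℝ) : HasDerivAt (fun r : ℝ => r ^ 2) (2 * s) s := by
    simpa using hasDerivAt_pow 2 s
  obtain ⟨b, hb, hratio⟩ := exists_ratio_hasDerivAt_eq_ratio_slope _ _ hd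
    (fun s hs => (hsum s hs).continuousAt.continuousWithinAt)
    (fun s hs => hsum s (Set.Ioo_subset_Icc_self hs))
    _ _ (fun s _ => (hsq s).continuousAt.continuousWithinAt) (fun s _ => hsq s)
  have hsub : Set.Icc (x - b) (x + b) ⊆ Set.Icc (x - d) (x + d) :=
    Set.Icc_subset_Icc (by linarith [hb.2]) (by linarith [hb.2])
  obtain ⟨c, hc, hslope⟩ := exists_hasDerivAt_eq_slope f' f'' (by linarith [hb.1])
    (fun s hs => (hf' s (hsub hs)).continuousAt.continuousWithinAt)
    (fun s hs => hf' s (hsub (Set.Ioo_subset_Icc_self hs)))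
  refine ⟨c, ⟨by linarith [hb.2, hc.1], by linarith [hb.2, hc.2]⟩, ?_⟩
  rw [hslope, div_eq_div_iff (by linarith [hb.1]) (by positivity)]
  simp only [add_zero, sub_zero] at hratio
  linear_combination hratio

variable {ι P : Type*} [TopologicalSpace P] {l : Filter ι} {p : ι → P} {p₀ : P}
  {x y : ι → ℝ} {x₀ : ℝ}

lemma eventually_forall_mem_Icc {Q : P × ℝ → Prop} (hQ : ∀ᶠ z in 𝓝 (p₀, x₀), Q z)
    (hp : Tendsto p l (𝓝 p₀)) (hx : Tendsto x l (𝓝 x₀)) (hy : Tendsto y l (𝓝 x₀)) :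
    ∀ᶠ m in l, ∀ c ∈ Set.Icc (x m) (y m), Q (p m, c) := by
  rw [nhds_prod_eq] at hQ
  obtain ⟨U, hU, V, hV, hUV⟩ := eventually_prod_iff.1 hQ
  filter_upwards [hp.eventually hU, (hx.Icc hy).eventually (eventually_smallSets_forall.2 hV)]
    with m hm hIcc c hc using hUV hm (hIcc c hc)

variable {w w' w'' : P → ℝ → ℝ}

lemma tendsto_slope_of_hasDerivAt
    (hw : ∀ᶠ z : P × ℝ in 𝓝 (p₀, x₀), HasDerivAt (w z.1) (w' z.1 z.2) z.2)
    (hw' : ContinuousAt (fun z : P × ℝ => w' z.1 z.2) (p₀, x₀))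
    (hp : Tendsto p l (𝓝 p₀)) (hx : Tendsto x l (𝓝 x₀)) (hy : Tendsto y l (𝓝 x₀))
    (hxy : ∀ᶠ m in l, x m < y m) :
    Tendsto (fun m => (w (p m) (y m) - w (p m) (x m)) / (y m - x m)) l (𝓝 (w' p₀ x₀)) := by
  refine tendsto_def.2 fun U hU => ?_
  filter_upwards [hxy, eventually_forall_mem_Icc (hw.and (hw'.eventually_mem hU)) hp hx hy]
    with m hlt hm
  obtain ⟨c, hc, hslope⟩ := exists_hasDerivAt_eq_slope (w (p m)) (w' (p m)) hlt
    (fun s hs => (hm s hs).1.continuousAt.continuousWithinAt)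
    (fun s hs => (hm s (Set.Ioo_subset_Icc_self hs)).1)
  simpa only [Set.mem_preimage, hslope] using (hm c (Set.Ioo_subset_Icc_self hc)).2

lemma tendsto_second_difference_of_hasDerivAt {d : ι → ℝ}
    (hw : ∀ᶠ z : P × ℝ in 𝓝 (p₀, x₀), HasDerivAt (w z.1) (w' z.1 z.2) z.2)
    (hw' : ∀ᶠ z : P × ℝ in 𝓝 (p₀, x₀), HasDerivAt (w' z.1) (w'' z.1 z.2) z.2)
    (hw'' : ContinuousAt (fun z : P × ℝ => w'' z.1 z.2) (p₀, x₀))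
    (hp : Tendsto p l (𝓝 p₀)) (hx : Tendsto x l (𝓝 x₀)) (hd : Tendsto d l (𝓝[>] 0)) :
    Tendsto (fun m => (w (p m) (x m + d m) - 2 * w (p m) (x m) + w (p m) (x m - d m)) / d m ^ 2)
      l (𝓝 (w'' p₀ x₀)) := by
  obtain ⟨hd₀, hpos⟩ := tendsto_nhdsWithin_iff.1 hd
  have hleft : Tendsto (fun m => x m - d m) l (𝓝 x₀) := by simpa using hx.sub hd₀
  have hright : Tendsto (fun m => x m + d m) l (𝓝 x₀) := by simpa using hx.add hd₀
  refine tendsto_def.2 fun U hU => ?_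
  filter_upwards [hpos, eventually_forall_mem_Icc (hw.and (hw'.and (hw''.eventually_mem hU)))
    hp hleft hright] with m hdm hm
  obtain ⟨c, hc, hdiff⟩ := exists_hasDerivAt_eq_second_difference hdm
    (fun s hs => (hm s hs).1) (fun s hs => (hm s hs).2.1)
  simpa only [Set.mem_preimage, hdiff] using (hm c (Set.Ioo_subset_Icc_self hc)).2.2

end Calculus

section Interpolation

variable {δ a : ℝ} {N : ℕ}

lemma interp_add_const (δ : ℝ) (N : ℕ) (f : ℤ → ℝ) (c a : ℝ) :
    interp δ N (fun j => f j + c) a = interp δ N f a + c := by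
  simp only [interp]
  ring

lemma exists_interp_eq_convex_combination (hδ : 0 < δ) (ha : |a| ≤ N * δ) (f : ℤ → ℝ) :
    ∃ (j : ℤ) (θ : ℝ), 0 ≤ θ ∧ θ ≤ 1 ∧ (j + θ) * δ = a ∧
      interp δ N f a = (1 - θ) * f j + θ * f (j + 1) := by
  obtain ⟨hl, hr⟩ := abs_le.1 ha
  have hle : a / δ ≤ N := (div_le_iff₀ hδ).2 hr
  refine ⟨min ⌊a / δ⌋ (N - 1), a / δ - (min ⌊a / δ⌋ (N - 1) : ℤ), ?_, ?_, ?_, ?_⟩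
  · have hmin : ((min ⌊a / δ⌋ (N - 1) : ℤ) : ℝ) ≤ ⌊a / δ⌋ := mod_cast min_le_left _ _
    linarith [Int.floor_le (a / δ)]
  · rcases min_choice ⌊a / δ⌋ ((N : ℤ) - 1) with h | h <;> rw [h]
    · linarith [Int.lt_floor_add_one (a / δ)]
    · push_cast
      linarith
  · rw [add_sub_cancel, div_mul_cancel₀ _ hδ.ne']
  · simp only [interp, min_eq_right hr, max_eq_right hl]

lemma interp_intCast_mul (hδ : 0 < δ) {j : ℤ} (hj : |j| ≤ N) (f : ℤ → ℝ) :
    interp δ N f (j * δ) = f j := by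
  have hj' : |(j : ℝ)| ≤ N := mod_cast hj
  obtain ⟨i, θ, hθ₀, hθ₁, hsum, hinterp⟩ := exists_interp_eq_convex_combination (a := j * δ) hδ
    (by rw [abs_mul, abs_of_pos hδ]; gcongr) f
  have hθ : θ = (j - i : ℤ) := by
    push_cast
    linarith [mul_right_cancel₀ hδ.ne' hsum]
  -- The cell used at `j = N` is the one ending there, so `j` may be either endpoint.
  have hcases : j - i = 0 ∨ j - i = 1 := by
    rw [hθ] at hθ₀ hθ₁
    have h₀ : 0 ≤ j - i := mod_cast hθ₀
    have h₁ : j - i ≤ 1 := mod_cast hθ₁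
    omega
  rw [hinterp, hθ]
  rcases hcases with h | h
  · simp [show j = i by omega]
  · simp [show j = i + 1 by omega]

lemma interp_mem_of_convex_s11 {s : Set ℝ} (hs : Convex ℝ s) (hδ : 0 < δ) (ha : |a| ≤ N * δ)
    {f : ℤ → ℝ} (hf : ∀ j : ℤ, j * δ ∈ Set.Icc (a - δ) (a + δ) → f j ∈ s) :
    interp δ N f a ∈ s := by
  obtain ⟨j, θ, hθ₀, hθ₁, hsum, hinterp⟩ := exists_interp_eq_convex_combination hδ ha f
  rw [hinterp]
  refine hs (hf j ⟨?_, ?_⟩) (hf (j + 1) ⟨?_, ?_⟩) (sub_nonneg.2 hθ₁) hθ₀ (sub_add_cancel 1 θ) <;>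
    push_cast <;> nlinarith

end Interpolation

section Generator

variable (k ρ lamA lamB γa γb : ℝ) (la lb : Bool)

/-- The generator `L^{lᵃ,lᵇ}φ` of the controlled process, applied to `φ = u` with
`∂_αφ = ua` and `∂²_{αα}φ = uaa`; the derivatives are passed as separate functions. -/
def generator (u ua uaa : ℝ → ℝ → ℤ → ℝ) (t α : ℝ) (q : ℤ) : ℝ :=
  -(k * α) * ua t α q + ρ ^ 2 / 2 * uaa t α q
    + lamA * ((if la then u t (α + γa) (q - 1) else u t (α + γa) q) - u t α q)
    + lamB * ((if lb then u t (α - γb) (q + 1) else u t (α - γb) q) - u t α q)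

lemma Lδ_add_const (δα : ℝ) (Nα : ℕ) (v : ℤ → ℤ → ℝ) (c : ℝ) (i q : ℤ) :
    Lδ δα k ρ lamA lamB γa γb Nα la lb (fun j q' => v j q' + c) i q =
      Lδ δα k ρ lamA lamB γa γb Nα la lb v i q := by
  simp only [Lδ, interp_add_const]
  split_ifs <;> ring

lemma Lδ_eq_of_abs_lt {δα : ℝ} {Nα : ℕ} (hδα : 0 < δα) {i : ℤ} (hi : |i| < Nα)
    (v : ℤ → ℤ → ℝ) (q : ℤ) :
    Lδ δα k ρ lamA lamB γa γb Nα la lb v i q =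
      k * max (-(i * δα)) 0 * ((v (i + 1) q - v i q) / δα)
        - k * max (i * δα) 0 * ((v i q - v (i - 1) q) / δα)
        + ρ ^ 2 / 2 * ((v (i + 1) q - 2 * v i q + v (i - 1) q) / δα ^ 2)
        + lamA * (interp δα Nα (fun j => v j (if la then q - 1 else q)) (i * δα + γa) - v i q)
        + lamB * (interp δα Nα (fun j => v j (if lb then q + 1 else q)) (i * δα - γb) - v i q) := by
  obtain ⟨hl, hr⟩ := abs_lt.1 hi
  have hsucc : (i : ℝ) * δα + δα = (i + 1 : ℤ) * δα := by push_cast; ring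
  have hpred : (i : ℝ) * δα - δα = (i - 1 : ℤ) * δα := by push_cast; ring
  have hi_succ : |i + 1| ≤ Nα := abs_le.2 ⟨by omega, by omega⟩
  have hi_pred : |i - 1| ≤ Nα := abs_le.2 ⟨by omega, by omega⟩
  simp only [Lδ, hsucc, hpred, interp_intCast_mul hδα hi_succ, interp_intCast_mul hδα hi_pred,
    if_pos hi, mul_div_assoc]
  cases la <;> cases lb <;> rfl

end Generator

/-- A grid node `(tₙ, αᵢ) = (n·δt, i·δα)`, together with the grid it belongs to and the shift `ξ`
of the test function: the arguments along which the limit of the scheme is taken. -/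
structure GridNode where
  δt : ℝ
  δα : ℝ
  ξ : ℝ
  Nα : ℕ
  n : ℕ
  i : ℤ

namespace GridNode

/-- The time `t′ = n·δt` of a node. -/
def time (x : GridNode) : ℝ := x.n * x.δt

/-- The position `α′ = i·δα` of a node. -/
def position (x : GridNode) : ℝ := x.i * x.δα

/-- The joint limit `(δt, δα) → (0, 0)`, `(t′, α′) → (t, α)` along grid points of `[−A, A]`;
the shift `ξ` is left free. -/
def refinement (A t α : ℝ) : Filter GridNode :=
  comap (fun x => (x.δt, x.δα, x.time, x.position)) (𝓝 (0, 0, t, α)) ⊓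
    𝓟 {x | 0 < x.δt ∧ 0 < x.δα ∧ x.Nα * x.δα = A}

variable {A t α : ℝ}

lemma hasBasis_refinement (A t α : ℝ) : (refinement A t α).HasBasis (0 < ·) fun η =>
    {x | x.δt ∈ Set.Ioo 0 η ∧ x.δα ∈ Set.Ioo 0 η ∧ |x.time - t| < η ∧ |x.position - α| < η ∧
      x.Nα * x.δα = A} := by
  refine ((Metric.nhds_basis_ball.comap _).inf_principal _).congr (fun _ => Iff.rfl) ?_
  intro η _
  ext x
  simp only [Set.mem_inter_iff, Set.mem_preimage, Metric.mem_ball, Prod.dist_eq, Real.dist_eq,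
    sub_zero, max_lt_iff, Set.mem_ofPred_eq, Set.mem_Ioo]
  constructor
  · rintro ⟨⟨ht, hα, htime, hpos⟩, ht₀, hα₀, hA⟩
    exact ⟨⟨ht₀, (le_abs_self _).trans_lt ht⟩, ⟨hα₀, (le_abs_self _).trans_lt hα⟩, htime, hpos, hA⟩
  · rintro ⟨⟨ht₀, ht⟩, ⟨hα₀, hα⟩, htime, hpos, hA⟩
    exact ⟨⟨by rwa [abs_of_pos ht₀], by rwa [abs_of_pos hα₀], htime, hpos⟩, ht₀, hα₀, hA⟩

lemma eventually_pos_and_mul_eq :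
    ∀ᶠ x in refinement A t α, 0 < x.δt ∧ 0 < x.δα ∧ x.Nα * x.δα = A :=
  mem_inf_of_right (mem_principal_self _)

lemma tendsto_refinement : Tendsto (fun x => (x.δt, x.δα, x.time, x.position))
    (refinement A t α) (𝓝 0 ×ˢ 𝓝 0 ×ˢ 𝓝 t ×ˢ 𝓝 α) := by
  simp only [← nhds_prod_eq]
  exact tendsto_comap.mono_left inf_le_left

lemma tendsto_δt : Tendsto δt (refinement A t α) (𝓝[>] 0) :=
  tendsto_nhdsWithin_iff.2
    ⟨tendsto_fst.comp tendsto_refinement, eventually_pos_and_mul_eq.mono fun _ h => h.1⟩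

lemma tendsto_δα : Tendsto δα (refinement A t α) (𝓝[>] 0) :=
  tendsto_nhdsWithin_iff.2 ⟨(tendsto_fst.comp tendsto_snd).comp tendsto_refinement,
    eventually_pos_and_mul_eq.mono fun _ h => h.2.1⟩

lemma tendsto_time : Tendsto time (refinement A t α) (𝓝 t) :=
  (tendsto_fst.comp (tendsto_snd.comp tendsto_snd)).comp tendsto_refinement

lemma tendsto_position : Tendsto position (refinement A t α) (𝓝 α) :=
  (tendsto_snd.comp (tendsto_snd.comp tendsto_snd)).comp tendsto_refinement

lemma eventually_abs_i_lt (hα : |α| < A) : ∀ᶠ x in refinement A t α, |x.i| < x.Nα := by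
  filter_upwards [tendsto_position.abs.eventually_lt_const hα, eventually_pos_and_mul_eq]
    with x hx ⟨_, hδα, hA⟩
  rw [position, abs_mul, abs_of_pos hδα, ← hA] at hx
  exact_mod_cast lt_of_mul_lt_mul_right hx hδα.le

lemma tendsto_interp {w : ℝ → ℝ → ℝ} {a : ℝ}
    (hw : ContinuousAt (fun z : ℝ × ℝ => w z.1 z.2) (t, a)) (ha : |a| < A) {b : GridNode → ℝ}
    (hb : Tendsto b (refinement A t α) (𝓝 a)) :
    Tendsto (fun x => interp x.δα x.Nα (fun j => w x.time (j * x.δα)) (b x)) (refinement A t α)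
      (𝓝 (w t a)) := by
  have hδα := (tendsto_δα (A := A) (t := t) (α := α)).mono_right nhdsWithin_le_nhds
  have hleft : Tendsto (fun x => b x - x.δα) (refinement A t α) (𝓝 a) := by
    simpa using hb.sub hδα
  have hright : Tendsto (fun x => b x + x.δα) (refinement A t α) (𝓝 a) := by
    simpa using hb.add hδα
  refine Metric.nhds_basis_ball.tendsto_right_iff.2 fun e he => ?_
  filter_upwards [eventually_pos_and_mul_eq, hb.abs.eventually_lt_const ha,
    eventually_forall_mem_Icc (hw.eventually_mem (Metric.ball_mem_nhds _ he))
      tendsto_time hleft hright] with x ⟨_, hδα, hA⟩ hbA hball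
  exact interp_mem_of_convex_s11 (convex_ball _ _) hδα (hA ▸ hbA.le) fun j hj => hball _ hj

end GridNode

section Consistency

open GridNode

variable {A t α : ℝ} {q : ℤ} {u ut ua uaa : ℝ → ℝ → ℤ → ℝ}

lemma tendsto_forward_time_difference
    (hut : ∀ᶠ z : ℝ × ℝ in 𝓝 (t, α), HasDerivAt (fun s => u s z.2 q) (ut z.1 z.2 q) z.1)
    (hcut : ContinuousAt (fun z : ℝ × ℝ => ut z.1 z.2 q) (t, α)) :
    Tendsto (fun x : GridNode =>
      (u (x.time + x.δt) x.position q - u x.time x.position q) / x.δt)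
      (refinement A t α) (𝓝 (ut t α q)) := by
  have hswap : Tendsto Prod.swap (𝓝 (α, t)) (𝓝 (t, α)) := continuous_swap.tendsto _
  obtain ⟨hδt, hpos⟩ := tendsto_nhdsWithin_iff.1 (tendsto_δt (A := A) (t := t) (α := α))
  have hnext : Tendsto (fun x : GridNode => x.time + x.δt) (refinement A t α) (𝓝 t) := by
    simpa using tendsto_time.add hδt
  simpa using tendsto_slope_of_hasDerivAt (w := fun a s => u s a q) (w' := fun a s => ut s a q)
    (hswap.eventually hut) (hcut.tendsto.comp hswap) tendsto_position tendsto_time hnext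
    (hpos.mono fun x hx => lt_add_of_pos_right x.time hx)

lemma tendsto_upwind_difference (k : ℝ)
    (hua : ∀ᶠ z : ℝ × ℝ in 𝓝 (t, α), HasDerivAt (fun a => u z.1 a q) (ua z.1 z.2 q) z.2)
    (hcua : ContinuousAt (fun z : ℝ × ℝ => ua z.1 z.2 q) (t, α)) :
    Tendsto (fun x : GridNode =>
      k * max (-x.position) 0 *
          ((u x.time (x.position + x.δα) q - u x.time x.position q) / x.δα)
        - k * max x.position 0 *
          ((u x.time x.position q - u x.time (x.position - x.δα) q) / x.δα))
      (refinement A t α) (𝓝 (-(k * α) * ua t α q)) := by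
  have hpos := tendsto_position (A := A) (t := t) (α := α)
  obtain ⟨hδα, hδα₀⟩ := tendsto_nhdsWithin_iff.1 (tendsto_δα (A := A) (t := t) (α := α))
  have hright : Tendsto (fun x => x.position + x.δα) (refinement A t α) (𝓝 α) := by
    simpa using hpos.add hδα
  have hleft : Tendsto (fun x => x.position - x.δα) (refinement A t α) (𝓝 α) := by
    simpa using hpos.sub hδα
  have hforward := tendsto_slope_of_hasDerivAt (w := fun s a => u s a q)
    (w' := fun s a => ua s a q) hua hcua tendsto_time hpos hright
    (hδα₀.mono fun x hx => lt_add_of_pos_right x.position hx)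
  have hbackward := tendsto_slope_of_hasDerivAt (w := fun s a => u s a q)
    (w' := fun s a => ua s a q) hua hcua tendsto_time hleft hpos
    (hδα₀.mono fun x hx => sub_lt_self x.position hx)
  have hlim := (((hpos.neg.max (tendsto_const_nhds (x := 0))).const_mul k).mul hforward).sub
    (((hpos.max (tendsto_const_nhds (x := 0))).const_mul k).mul hbackward)
  have hupwind : k * max (-α) 0 * ua t α q - k * max α 0 * ua t α q = -(k * α) * ua t α q := by
    linear_combination -(k * ua t α q) * max_zero_sub_max_neg_zero_eq_self α
  simpa only [add_sub_cancel_left, sub_sub_cancel, hupwind] using hlim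

lemma tendsto_Lδ (k ρ lamA lamB : ℝ) {γa γb : ℝ} (la lb : Bool)
    (hua : ∀ᶠ z : ℝ × ℝ in 𝓝 (t, α), HasDerivAt (fun a => u z.1 a q) (ua z.1 z.2 q) z.2)
    (huaa : ∀ᶠ z : ℝ × ℝ in 𝓝 (t, α), HasDerivAt (fun a => ua z.1 a q) (uaa z.1 z.2 q) z.2)
    (hcu : ∀ (a : ℝ) (q' : ℤ), ContinuousAt (fun z : ℝ × ℝ => u z.1 z.2 q') (t, a))
    (hcua : ContinuousAt (fun z : ℝ × ℝ => ua z.1 z.2 q) (t, α))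
    (hcuaa : ContinuousAt (fun z : ℝ × ℝ => uaa z.1 z.2 q) (t, α))
    (hα : |α| < A) (hαγa : |α + γa| < A) (hαγb : |α - γb| < A) :
    Tendsto (fun x : GridNode => Lδ x.δα k ρ lamA lamB γa γb x.Nα la lb
        (fun j q' => u x.time (j * x.δα) q') x.i q)
      (refinement A t α) (𝓝 (generator k ρ lamA lamB γa γb la lb u ua uaa t α q)) := by
  have hpos := tendsto_position (A := A) (t := t) (α := α)
  have hvalue : Tendsto (fun x => u x.time x.position q) (refinement A t α) (𝓝 (u t α q)) :=
    (hcu α q).tendsto.comp (tendsto_time.prodMk_nhds hpos)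
  have hsecond := tendsto_second_difference_of_hasDerivAt (w := fun s a => u s a q)
    (w' := fun s a => ua s a q) (w'' := fun s a => uaa s a q) hua huaa hcuaa tendsto_time hpos
    tendsto_δα
  have hask := tendsto_interp (w := fun s a => u s a (if la then q - 1 else q))
    (hcu (α + γa) _) hαγa (hpos.add_const γa)
  have hbid := tendsto_interp (w := fun s a => u s a (if lb then q + 1 else q))
    (hcu (α - γb) _) hαγb (hpos.sub_const γb)
  have hlim := (((tendsto_upwind_difference k hua hcua).add (hsecond.const_mul (ρ ^ 2 / 2))).add
    ((hask.sub hvalue).const_mul lamA)).add ((hbid.sub hvalue).const_mul lamB)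
  have hgenerator : generator k ρ lamA lamB γa γb la lb u ua uaa t α q =
      -(k * α) * ua t α q + ρ ^ 2 / 2 * uaa t α q
        + lamA * (u t (α + γa) (if la then q - 1 else q) - u t α q)
        + lamB * (u t (α - γb) (if lb then q + 1 else q) - u t α q) := by
    cases la <;> cases lb <;> rfl
  rw [hgenerator]
  refine hlim.congr' ?_
  filter_upwards [eventually_abs_i_lt hα, eventually_pos_and_mul_eq] with x hi ⟨_, hδα, _⟩
  have hsucc : ((x.i + 1 : ℤ) : ℝ) * x.δα = x.position + x.δα := by
    push_cast [position]
    ring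
  have hpred : ((x.i - 1 : ℤ) : ℝ) * x.δα = x.position - x.δα := by
    push_cast [position]
    ring
  rw [Lδ_eq_of_abs_lt k ρ lamA lamB γa γb la lb hδα hi, hsucc, hpred]
  rfl

lemma tendsto_ftil (σ φp Δ lamA lamB : ℝ) (la lb : Bool) (q : ℤ) :
    Tendsto (fun x : GridNode => ftil σ φp Δ lamA lamB la lb x.position q) (refinement A t α)
      (𝓝 (ftil σ φp Δ lamA lamB la lb α q)) := by
  have hcont : Continuous fun a => ftil σ φp Δ lamA lamB la lb a q := by
    unfold ftil
    fun_prop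
  exact (hcont.tendsto α).comp tendsto_position

lemma tendsto_impulse (Υ : ℝ) {q' : ℤ}
    (hq : ContinuousAt (fun z : ℝ × ℝ => u z.1 z.2 q) (t, α))
    (hq' : ContinuousAt (fun z : ℝ × ℝ => u z.1 z.2 q') (t, α)) :
    Tendsto (fun x : GridNode => u x.time x.position q' - u x.time x.position q - Υ)
      (refinement A t α) (𝓝 (u t α q' - Υ - u t α q)) := by
  have hnode := (tendsto_time (A := A) (t := t) (α := α)).prodMk_nhds tendsto_position
  rw [sub_right_comm]
  exact ((hq'.tendsto.comp hnode).sub (hq.tendsto.comp hnode)).sub_const Υ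

theorem scheme_consistency_general (σ Δ Υ lamA lamB k ρ φp : ℝ) {γa γb : ℝ}
    (hut : ∀ᶠ z : ℝ × ℝ in 𝓝 (t, α), HasDerivAt (fun s => u s z.2 q) (ut z.1 z.2 q) z.1)
    (hua : ∀ᶠ z : ℝ × ℝ in 𝓝 (t, α), HasDerivAt (fun a => u z.1 a q) (ua z.1 z.2 q) z.2)
    (huaa : ∀ᶠ z : ℝ × ℝ in 𝓝 (t, α), HasDerivAt (fun a => ua z.1 a q) (uaa z.1 z.2 q) z.2)
    (hcu : ∀ (a : ℝ) (q' : ℤ), ContinuousAt (fun z : ℝ × ℝ => u z.1 z.2 q') (t, a))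
    (hcut : ContinuousAt (fun z : ℝ × ℝ => ut z.1 z.2 q) (t, α))
    (hcua : ContinuousAt (fun z : ℝ × ℝ => ua z.1 z.2 q) (t, α))
    (hcuaa : ContinuousAt (fun z : ℝ × ℝ => uaa z.1 z.2 q) (t, α))
    (hα : |α| < A) (hαγa : |α + γa| < A) (hαγb : |α - γb| < A) :
    Tendsto (fun x : GridNode =>
        consistS x.δt x.δα σ Δ Υ lamA lamB k ρ γa γb φp x.Nα u x.n x.i q x.ξ)
      (refinement A t α)
      (𝓝 (consistTarget σ Δ Υ lamA lamB k ρ γa γb φp u ut ua uaa t α q)) := by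
  have hbranch (la lb : Bool) := ((tendsto_forward_time_difference (A := A) hut hcut).add
    (tendsto_Lδ k ρ lamA lamB la lb hua huaa hcu hcua hcuaa hα hαγa hαγb)).add
    (tendsto_ftil σ φp Δ lamA lamB la lb q)
  have himpulse (q' : ℤ) := tendsto_impulse (A := A) Υ (hcu α q) (hcu α q')
  simp only [consistS, Lδ_add_const, add_sub_add_right_eq_sub]
  exact (((hbranch false false).max (hbranch false true)).max
    ((hbranch true false).max (hbranch true true))).max
    ((himpulse (q + 1)).max (himpulse (q - 1)))

end Consistency

/-- Consistency of the implicit scheme: for a bounded test function `φ = u` that is `C¹` in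
`t` and `C²` in `α` (with jointly continuous derivatives `ut = ∂ₜu`, `ua = ∂_αu`,
`uaa = ∂²_{αα}u`), at every point `(t, α, q)` with `t ∈ [0, T)`, `α ∈ (−A, A)`,
`α + γᵃ < A`, `α − γᵇ > −A` and `|q| < Q̄`, the scheme value `S(δ, (t′, α′, q), φ(t′,α′,q)+ξ)`
converges, in the joint limit `(δt, δα) → (0, 0)`, `(t′, α′) → (t, α)` along grid points,
`ξ → 0`, to the value of the HJBQVI operator at `(t, α, q)`. -/
theorem scheme_consistency
    (T A σ Δ ε Υ lamA lamB k ρ γa γb φp ψ : ℝ) (Qb : ℤ)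
    (hT : 0 < T) (hA : 0 < A) (hQ : 1 ≤ Qb) (hσ : 0 < σ) (hΔ : 0 ≤ Δ) (hε : 0 < ε)
    (hΥ : Υ = Δ + ε) (hlamA : 0 < lamA) (hlamB : 0 < lamB) (hk : 0 < k) (hρ : 0 < ρ)
    (hγa : 0 < γa) (hγb : 0 < γb) (hφp : 0 < φp) (hψ : 0 < ψ)
    (u ut ua uaa : ℝ → ℝ → ℤ → ℝ)
    (hbdd : ∃ C : ℝ, ∀ (t' α' : ℝ) (q' : ℤ), |u t' α' q'| ≤ C)
    (hut : ∀ (t' α' : ℝ) (q' : ℤ), HasDerivAt (fun s => u s α' q') (ut t' α' q') t')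
    (hua : ∀ (t' α' : ℝ) (q' : ℤ), HasDerivAt (fun b => u t' b q') (ua t' α' q') α')
    (huaa : ∀ (t' α' : ℝ) (q' : ℤ), HasDerivAt (fun b => ua t' b q') (uaa t' α' q') α')
    (hcu : ∀ q' : ℤ, Continuous fun p : ℝ × ℝ => u p.1 p.2 q')
    (hcut : ∀ q' : ℤ, Continuous fun p : ℝ × ℝ => ut p.1 p.2 q')
    (hcua : ∀ q' : ℤ, Continuous fun p : ℝ × ℝ => ua p.1 p.2 q')
    (hcuaa : ∀ q' : ℤ, Continuous fun p : ℝ × ℝ => uaa p.1 p.2 q')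
    (t α : ℝ) (q : ℤ)
    (ht0 : 0 ≤ t) (htT : t < T) (hαl : -A < α) (hαr : α < A)
    (hαγa : α + γa < A) (hαγb : -A < α - γb) (hq : |q| < Qb) :
    ∀ e : ℝ, 0 < e → ∃ η : ℝ, 0 < η ∧
      ∀ (δt δα ξ : ℝ) (N Nα n : ℕ) (i : ℤ),
        0 < N → δt = T / N → 0 < δα → (Nα : ℝ) * δα = A →
        n < N → |i| ≤ (Nα : ℤ) →
        δt < η → δα < η → |ξ| < η →
        |(n : ℝ) * δt - t| < η → |(i : ℝ) * δα - α| < η →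
        |consistS δt δα σ Δ Υ lamA lamB k ρ γa γb φp Nα u n i q ξ
            - consistTarget σ Δ Υ lamA lamB k ρ γa γb φp u ut ua uaa t α q| < e := by
  intro e he
  obtain ⟨η, hη, h⟩ := ((GridNode.hasBasis_refinement A t α).tendsto_iff
    Metric.nhds_basis_ball).1 (scheme_consistency_general σ Δ Υ lamA lamB k ρ φp
      (.of_forall fun z => hut z.1 z.2 q) (.of_forall fun z => hua z.1 z.2 q)
      (.of_forall fun z => huaa z.1 z.2 q) (fun _ q' => (hcu q').continuousAt)
      (hcut q).continuousAt (hcua q).continuousAt (hcuaa q).continuousAt (abs_lt.2 ⟨hαl, hαr⟩)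
      (abs_lt.2 ⟨by linarith, hαγa⟩) (abs_lt.2 ⟨hαγb, by linarith⟩)) e he
  exact ⟨η, hη, fun δt δα ξ N Nα n i hN hδt hδα hgrid _ _ hδtη hδαη _ htime hpos =>
    h ⟨δt, δα, ξ, Nα, n, i⟩ ⟨⟨hδt ▸ by positivity, hδtη⟩, ⟨hδα, hδαη⟩, htime, hpos, hgrid⟩⟩
end
end
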